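/- arXiv:2303.05421 — 15 statements merged into one kernel-verified Lean document; each statement's English description precedes it below -/
import Mathlib

section
/- (Monotonicity of the mapping φ₁, part of Lemma 3.6.) Let α¹, α² ∈ ℝ_{>0}^n with α¹_i ≥ α²_i for every i. Then J(s; α¹) ≥ J(s; α²) for every s ∈ A. Moreover, if in addition α¹ ≠ α², then J(s; α¹) > J(s; α²) for every s ∈ A with s > 0. -/
open Set Filter Topology

/-- monotonicity of φ₁, part of Lemma 3.6: if `α¹ ≥ α²`
componentwise then `J(s; α¹) ≥ J(s; α²)` for all `s ∈ A`, with strict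
inequality for `s > 0` whenever `α¹ ≠ α²`. -/
theorem stmt_2
    (n : ℕ) (hn : 1 ≤ n) (M : Fin n → ℝ) (hM : ∀ i, 0 < M i)
    (I : Fin n → ℝ → ℝ)
    (hIcont : ∀ i, ContinuousOn (I i) (Ici 0))
    (hImono : ∀ i, StrictMonoOn (I i) (Ici 0))
    (hI0 : ∀ i, I i 0 = 0)
    (hIlt : ∀ i z, 0 ≤ z → I i z < M i)
    (hIlim : ∀ i, Tendsto (I i) atTop (𝓝 (M i)))
    -- `J α s` is the unique nonnegative solution `z` of `∑ i, I i (z / α i) = s`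
    (J : (Fin n → ℝ) → ℝ → ℝ)
    (hJ : ∀ α : Fin n → ℝ, (∀ i, 0 < α i) → ∀ s ∈ Ico 0 (∑ i, M i),
      0 ≤ J α s ∧ ∑ i, I i (J α s / α i) = s)
    (α₁ α₂ : Fin n → ℝ) (hα₁ : ∀ i, 0 < α₁ i) (hα₂ : ∀ i, 0 < α₂ i)
    (hle : ∀ i, α₂ i ≤ α₁ i) :
    (∀ s ∈ Ico 0 (∑ i, M i), J α₂ s ≤ J α₁ s) ∧
    (α₁ ≠ α₂ → ∀ s ∈ Ico 0 (∑ i, M i), 0 < s → J α₂ s < J α₁ s) := by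
  have le_div : ∀ {z₁ z₂ : ℝ}, 0 ≤ z₂ → z₁ ≤ z₂ → ∀ i, z₁ / α₁ i ≤ z₂ / α₂ i :=
    fun hz₂ hz i => div_le_div₀ hz₂ hz (hα₂ i) (hle i)
  -- A strict inequality between arguments at one index contradicts equality of the sums.
  have not_lt : ∀ s ∈ Ico 0 (∑ i, M i), J α₁ s ≤ J α₂ s →
      ∀ i, ¬ J α₁ s / α₁ i < J α₂ s / α₂ i := by
    intro s hs hz i hi
    obtain ⟨h₁, e₁⟩ := hJ α₁ hα₁ s hs
    obtain ⟨h₂, e₂⟩ := hJ α₂ hα₂ s hs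
    have nonneg₁ : ∀ j, J α₁ s / α₁ j ∈ Ici (0 : ℝ) := fun j => div_nonneg h₁ (hα₁ j).le
    have nonneg₂ : ∀ j, J α₂ s / α₂ j ∈ Ici (0 : ℝ) := fun j => div_nonneg h₂ (hα₂ j).le
    have sum_lt : ∑ j, I j (J α₁ s / α₁ j) < ∑ j, I j (J α₂ s / α₂ j) :=
      Finset.sum_lt_sum
        (fun j _ => (hImono j).monotoneOn (nonneg₁ j) (nonneg₂ j) (le_div h₂ hz j))
        ⟨i, Finset.mem_univ i, hImono i (nonneg₁ i) (nonneg₂ i) hi⟩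
    rw [e₁, e₂] at sum_lt
    exact lt_irrefl s sum_lt
  refine ⟨fun s hs => ?_, fun hne s hs hpos => ?_⟩
  · by_contra! hlt
    let i : Fin n := ⟨0, hn⟩
    exact not_lt s hs hlt.le i
      ((le_div (hJ α₁ hα₁ s hs).1 le_rfl i).trans_lt (div_lt_div_of_pos_right hlt (hα₂ i)))
  · by_contra! hz
    obtain ⟨i, hi⟩ := Function.ne_iff.mp hne
    obtain ⟨h₂, e₂⟩ := hJ α₂ hα₂ s hs
    have J_pos : 0 < J α₂ s := by
      refine h₂.lt_of_ne fun h => hpos.ne ?_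
      rw [← e₂, ← h]
      simp [hI0]
    exact not_lt s hs hz i
      ((div_le_div_of_nonneg_right hz (hα₁ i).le).trans_lt
        (div_lt_div_of_pos_left J_pos (hα₂ i) ((hle i).lt_of_ne' hi)))
end

section
/- (Continuity of the mapping φ₁, part of Lemma 3.6.) Let (α^k)_{k≥1} be a sequence in ℝ_{>0}^n converging to α ∈ ℝ_{>0}^n. Then for every s ∈ A, J(s; α^k) → J(s; α) as k → ∞. -/
open Set Filter Topology

/-- If two nonnegative points give the same value under a sum of strictly increasing functions,
then some coordinate of the first is at most the corresponding coordinate of the second. -/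
theorem exists_le_of_sum_eq_of_strictMonoOn {ι : Type*} [Fintype ι] [Nonempty ι]
    {f : ι → ℝ → ℝ} (hf : ∀ i, StrictMonoOn (f i) (Ici 0)) {x y : ι → ℝ}
    (hx : ∀ i, 0 ≤ x i) (hy : ∀ i, 0 ≤ y i)
    (h : ∑ i, f i (x i) = ∑ i, f i (y i)) : ∃ i, x i ≤ y i := by
  by_contra! hlt
  exact (Finset.sum_lt_sum_of_nonempty Finset.univ_nonempty
    fun i _ => hf i (hy i) (hx i) (hlt i)).ne' h

/-- continuity of φ₁, part of Lemma 3.6: if `α^k → α` in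
`ℝ_{>0}^n`, then `J(s; α^k) → J(s; α)` for every `s ∈ A`. -/
theorem stmt_3
    (n : ℕ) (hn : 1 ≤ n) (M : Fin n → ℝ) (hM : ∀ i, 0 < M i)
    (I : Fin n → ℝ → ℝ)
    (hIcont : ∀ i, ContinuousOn (I i) (Ici 0))
    (hImono : ∀ i, StrictMonoOn (I i) (Ici 0))
    (hI0 : ∀ i, I i 0 = 0)
    (hIlt : ∀ i z, 0 ≤ z → I i z < M i)
    (hIlim : ∀ i, Tendsto (I i) atTop (𝓝 (M i)))
    -- `J α s` is the unique nonnegative solution `z` of `∑ i, I i (z / α i) = s`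
    (J : (Fin n → ℝ) → ℝ → ℝ)
    (hJ : ∀ α : Fin n → ℝ, (∀ i, 0 < α i) → ∀ s ∈ Ico 0 (∑ i, M i),
      0 ≤ J α s ∧ ∑ i, I i (J α s / α i) = s)
    (αk : ℕ → Fin n → ℝ) (hαk : ∀ k i, 0 < αk k i)
    (α : Fin n → ℝ) (hα : ∀ i, 0 < α i)
    (hconv : Tendsto αk atTop (𝓝 α)) :
    ∀ s ∈ Ico 0 (∑ i, M i),
      Tendsto (fun k => J (αk k) s) atTop (𝓝 (J α s)) := by
  intro s hs
  have : Nonempty (Fin n) := ⟨⟨0, hn⟩⟩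
  obtain ⟨hz, hzs⟩ := hJ α hα s hs
  have hlim (i : Fin n) :
      Tendsto (fun k => J α s / α i * αk k i) atTop (𝓝 (J α s)) := by
    have h := (tendsto_pi_nhds.1 hconv i).const_mul (J α s / α i)
    rwa [div_mul_cancel₀ _ (hα i).ne'] at h
  refine tendsto_order.2 ⟨fun a ha => ?_, fun a ha => ?_⟩
  · filter_upwards [eventually_all.2 fun i => (hlim i).eventually_const_lt ha] with k hk
    obtain ⟨hzk, hzks⟩ := hJ (αk k) (hαk k) s hs
    obtain ⟨i, hi⟩ := exists_le_of_sum_eq_of_strictMonoOn hImono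
      (fun i => div_nonneg hz (hα i).le) (fun i => div_nonneg hzk (hαk k i).le)
      (hzs.trans hzks.symm)
    exact (hk i).trans_le ((le_div_iff₀ (hαk k i)).1 hi)
  · filter_upwards [eventually_all.2 fun i => (hlim i).eventually_lt_const ha] with k hk
    obtain ⟨hzk, hzks⟩ := hJ (αk k) (hαk k) s hs
    obtain ⟨i, hi⟩ := exists_le_of_sum_eq_of_strictMonoOn hImono
      (fun i => div_nonneg hzk (hαk k i).le) (fun i => div_nonneg hz (hα i).le)
      (hzks.trans hzs.symm)
    exact ((div_le_iff₀ (hαk k i)).1 hi).trans_lt (hk i)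
end

section
/- (Lemma 3.7, non-sectionality property of φ₁.) Let Q and R be nonempty complementary subsets of the index set {1, …, n}, fix positive numbers α_i > 0 for i ∈ Q, and let (α^k)_{k≥1} be a sequence in ℝ_{>0}^n such that α^k_i = α_i for all i ∈ Q and all k, while α^k_i → ∞ as k → ∞ for every i ∈ R. Then for every s ∈ A with s ≥ Σ_{i∈Q} M_i, one has J(s; α^k) → ∞ as k → ∞. -/
open Set Filter Topology

/-- Lemma 3.7, non-sectionality property of φ₁: if the weights
with indices in `Q` are held fixed and positive while those with indices in the
complementary set tend to infinity, then `J(s; α^k) → ∞` for every `s ∈ A`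
with `s ≥ ∑_{i ∈ Q} M i`. -/
theorem stmt_4
    (n : ℕ) (hn : 2 ≤ n) (M : Fin n → ℝ) (hM : ∀ i, 0 < M i)
    (I : Fin n → ℝ → ℝ)
    (hIcont : ∀ i, ContinuousOn (I i) (Ici 0))
    (hImono : ∀ i, StrictMonoOn (I i) (Ici 0))
    (hI0 : ∀ i, I i 0 = 0)
    (hIlt : ∀ i z, 0 ≤ z → I i z < M i)
    (hIlim : ∀ i, Tendsto (I i) atTop (𝓝 (M i)))
    -- `J α s` is the unique nonnegative solution `z` of `∑ i, I i (z / α i) = s`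
    (J : (Fin n → ℝ) → ℝ → ℝ)
    (hJ : ∀ α : Fin n → ℝ, (∀ i, 0 < α i) → ∀ s ∈ Ico 0 (∑ i, M i),
      0 ≤ J α s ∧ ∑ i, I i (J α s / α i) = s)
    (Q : Finset (Fin n)) (hQ : Q.Nonempty) (hR : Qᶜ.Nonempty)
    (α : Fin n → ℝ) (hα : ∀ i ∈ Q, 0 < α i)
    (αk : ℕ → Fin n → ℝ) (hαkpos : ∀ k i, 0 < αk k i)
    (hfix : ∀ k, ∀ i ∈ Q, αk k i = α i)
    (hinf : ∀ i ∉ Q, Tendsto (fun k => αk k i) atTop atTop) :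
    ∀ s ∈ Ico 0 (∑ i, M i), (∑ i ∈ Q, M i) ≤ s →
      Tendsto (fun k => J (αk k) s) atTop atTop := by
  intro s hs hQs
  refine tendsto_atTop.2 fun B => ?_
  set b := max B 0
  have hb : 0 ≤ b := le_max_right _ _
  have hlim : Tendsto (fun k => ∑ i, I i (b / αk k i)) atTop
      (𝓝 (∑ i, if i ∈ Q then I i (b / α i) else 0)) := by
    refine tendsto_finsetSum _ fun i _ => ?_
    by_cases hi : i ∈ Q
    · simp [hi, hfix _ i hi]
    · have h0 : Tendsto (fun k => b / αk k i) atTop (𝓝[Ici 0] 0) :=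
        tendsto_nhdsWithin_iff.2 ⟨(hinf i hi).const_div_atTop b,
          Eventually.of_forall fun k => div_nonneg hb (hαkpos k i).le⟩
      have hI : Tendsto (I i) (𝓝[Ici 0] 0) (𝓝 0) := by
        simpa only [ContinuousWithinAt, hI0 i] using hIcont i 0 self_mem_Ici
      simpa [hi, Function.comp_def] using hI.comp h0
  have hlt : (∑ i, if i ∈ Q then I i (b / α i) else 0) < s := by
    refine lt_of_lt_of_le ?_ hQs
    simpa [Finset.sum_ite_mem] using
      Finset.sum_lt_sum_of_nonempty hQ fun i hi => hIlt i _ (div_nonneg hb (hα i hi).le)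
  filter_upwards [hlim.eventually_lt_const hlt] with k hk
  obtain ⟨hJ0, hJs⟩ := hJ (αk k) (hαkpos k) s hs
  by_contra! hJB
  refine hk.not_ge ?_
  calc s = ∑ i, I i (J (αk k) s / αk k i) := hJs.symm
    _ ≤ ∑ i, I i (b / αk k i) := Finset.sum_le_sum fun i _ =>
        (hImono i).monotoneOn (div_nonneg hJ0 (hαkpos k i).le)
          (div_nonneg hb (hαkpos k i).le)
          (div_le_div_of_nonneg_right (hJB.le.trans (le_max_left _ _)) (hαkpos k i).le)
end

section
/- (Well-definedness of the mapping φ₂.) Let J : A → [0, ∞) be a strictly increasing function with J(0) = 0, let S be a random variable taking values in A with P(S > 0) = 1, and let i ∈ {1, …, n} with 0 < E[X_i] < M_i. Then the function α ↦ E[I_i(J(S)/α)] from (0, ∞) to ℝ is continuous and strictly decreasing, tends to M_i as α → 0⁺ and to 0 as α → ∞; consequently, the equation E[I_i(J(S)/α_i)] = E[X_i] has a unique solution α_i > 0. -/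
open Set Filter Topology MeasureTheory

section InverseMarginalDisutility

variable {Ω : Type*} [MeasurableSpace Ω] {P : Measure Ω} {f : ℝ → ℝ} {m : ℝ} {Y : Ω → ℝ}

/-- Composing an a.e. positive random variable, scaled by a positive constant, with a function
continuous on `[0, ∞)` preserves a.e. strong measurability. -/
theorem aestronglyMeasurable_comp_div_of_continuousOn_Ici (hf : ContinuousOn f (Ici 0))
    (hY : AEMeasurable Y P) (hpos : ∀ᵐ ω ∂P, 0 < Y ω) {a : ℝ} (ha : 0 < a) :
    AEStronglyMeasurable (fun ω => f (Y ω / a)) P := by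
  have hcont : Continuous fun x : ℝ => f (max x 0) :=
    hf.comp_continuous (by fun_prop) fun x => le_max_right x 0
  refine (hcont.measurable.comp_aemeasurable (hY.div_const a)).aestronglyMeasurable.congr ?_
  filter_upwards [hpos] with ω hω
  simp [max_eq_left (div_pos hω ha).le]

theorem norm_comp_div_le (hmono : StrictMonoOn f (Ici 0)) (h0 : f 0 = 0)
    (hlt : ∀ z, 0 ≤ z → f z < m) {y a : ℝ} (hy : 0 < y) (ha : 0 < a) :
    ‖f (y / a)‖ ≤ m := by
  have hz : 0 ≤ y / a := (div_pos hy ha).le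
  have hnonneg : f 0 ≤ f (y / a) := hmono.monotoneOn self_mem_Ici hz hz
  rw [h0] at hnonneg
  rw [Real.norm_of_nonneg hnonneg]
  exact (hlt _ hz).le

theorem integrable_comp_div [IsFiniteMeasure P] (hf : ContinuousOn f (Ici 0))
    (hmono : StrictMonoOn f (Ici 0)) (h0 : f 0 = 0) (hlt : ∀ z, 0 ≤ z → f z < m)
    (hY : AEMeasurable Y P) (hpos : ∀ᵐ ω ∂P, 0 < Y ω) {a : ℝ} (ha : 0 < a) :
    Integrable (fun ω => f (Y ω / a)) P := by
  refine (integrable_const m).mono'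
    (aestronglyMeasurable_comp_div_of_continuousOn_Ici hf hY hpos ha) ?_
  filter_upwards [hpos] with ω hω
  exact norm_comp_div_le hmono h0 hlt hω ha

/-- Dominated convergence for `a ↦ E[f(Y / a)]` along a filter on the positive reals. -/
theorem tendsto_integral_comp_div [IsFiniteMeasure P] (hf : ContinuousOn f (Ici 0))
    (hmono : StrictMonoOn f (Ici 0)) (h0 : f 0 = 0) (hlt : ∀ z, 0 ≤ z → f z < m)
    (hY : AEMeasurable Y P) (hpos : ∀ᵐ ω ∂P, 0 < Y ω) {l : Filter ℝ} [l.IsCountablyGenerated]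
    (hl : ∀ᶠ a in l, 0 < a) {g : ℝ → ℝ}
    (hg : ∀ y, 0 < y → Tendsto (fun a => f (y / a)) l (𝓝 (g y))) :
    Tendsto (fun a => ∫ ω, f (Y ω / a) ∂P) l (𝓝 (∫ ω, g (Y ω) ∂P)) := by
  refine tendsto_integral_filter_of_dominated_convergence (fun _ => m) ?_ ?_
    (integrable_const m) ?_
  · filter_upwards [hl] with a ha
    exact aestronglyMeasurable_comp_div_of_continuousOn_Ici hf hY hpos ha
  · filter_upwards [hl] with a ha
    filter_upwards [hpos] with ω hω
    exact norm_comp_div_le hmono h0 hlt hω ha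
  · filter_upwards [hpos] with ω hω
    exact hg _ hω

theorem continuousOn_integral_comp_div [IsFiniteMeasure P] (hf : ContinuousOn f (Ici 0))
    (hmono : StrictMonoOn f (Ici 0)) (h0 : f 0 = 0) (hlt : ∀ z, 0 ≤ z → f z < m)
    (hY : AEMeasurable Y P) (hpos : ∀ᵐ ω ∂P, 0 < Y ω) :
    ContinuousOn (fun a => ∫ ω, f (Y ω / a) ∂P) (Ioi 0) := by
  intro a ha
  refine ContinuousAt.continuousWithinAt ?_
  refine tendsto_integral_comp_div hf hmono h0 hlt hY hpos (lt_mem_nhds ha)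
    (g := fun y => f (y / a)) fun y hy => ?_
  have hfy : ContinuousAt f (y / a) := hf.continuousAt (Ici_mem_nhds (div_pos hy ha))
  exact hfy.tendsto.comp (tendsto_const_nhds.div tendsto_id (ne_of_gt ha))

theorem strictAntiOn_integral_comp_div [IsProbabilityMeasure P] (hf : ContinuousOn f (Ici 0))
    (hmono : StrictMonoOn f (Ici 0)) (h0 : f 0 = 0) (hlt : ∀ z, 0 ≤ z → f z < m)
    (hY : AEMeasurable Y P) (hpos : ∀ᵐ ω ∂P, 0 < Y ω) :
    StrictAntiOn (fun a => ∫ ω, f (Y ω / a) ∂P) (Ioi 0) := by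
  intro a ha b hb hab
  have hlt_ae : ∀ᵐ ω ∂P, f (Y ω / b) < f (Y ω / a) := by
    filter_upwards [hpos] with ω hω
    exact hmono (div_pos hω hb).le (div_pos hω ha).le (div_lt_div_of_pos_left hω ha hab)
  have hinta := integrable_comp_div hf hmono h0 hlt hY hpos ha
  have hintb := integrable_comp_div hf hmono h0 hlt hY hpos hb
  refine lt_of_le_of_ne (integral_mono_ae hintb hinta (hlt_ae.mono fun _ h => h.le)) fun heq => ?_
  have hae := (integral_eq_iff_of_ae_le hintb hinta (hlt_ae.mono fun _ h => h.le)).1 heq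
  obtain ⟨ω, hω, hω'⟩ := (hlt_ae.and hae).exists
  exact hω.ne hω'

theorem tendsto_integral_comp_div_nhdsGT_zero [IsProbabilityMeasure P]
    (hf : ContinuousOn f (Ici 0)) (hmono : StrictMonoOn f (Ici 0)) (h0 : f 0 = 0)
    (hlt : ∀ z, 0 ≤ z → f z < m) (hlim : Tendsto f atTop (𝓝 m))
    (hY : AEMeasurable Y P) (hpos : ∀ᵐ ω ∂P, 0 < Y ω) :
    Tendsto (fun a => ∫ ω, f (Y ω / a) ∂P) (𝓝[>] 0) (𝓝 m) := by
  have h := tendsto_integral_comp_div hf hmono h0 hlt hY hpos (l := 𝓝[>] 0)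
    self_mem_nhdsWithin (g := fun _ => m) fun y hy => by
      have hdiv : Tendsto (fun a : ℝ => y / a) (𝓝[>] 0) atTop := by
        simp only [div_eq_mul_inv]
        exact tendsto_inv_nhdsGT_zero.const_mul_atTop hy
      exact hlim.comp hdiv
  simpa using h

theorem tendsto_integral_comp_div_atTop [IsFiniteMeasure P]
    (hf : ContinuousOn f (Ici 0)) (hmono : StrictMonoOn f (Ici 0)) (h0 : f 0 = 0)
    (hlt : ∀ z, 0 ≤ z → f z < m)
    (hY : AEMeasurable Y P) (hpos : ∀ᵐ ω ∂P, 0 < Y ω) :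
    Tendsto (fun a => ∫ ω, f (Y ω / a) ∂P) atTop (𝓝 0) := by
  have h := tendsto_integral_comp_div hf hmono h0 hlt hY hpos (l := atTop)
    (eventually_gt_atTop 0) (g := fun _ => 0) fun y hy => by
      have hdiv : Tendsto (fun a : ℝ => y / a) atTop (𝓝[Ici 0] 0) := by
        refine tendsto_nhdsWithin_iff.2 ⟨tendsto_const_nhds.div_atTop tendsto_id, ?_⟩
        filter_upwards [eventually_gt_atTop 0] with a ha
        exact (div_pos hy ha).le
      have hf0 : Tendsto f (𝓝[Ici 0] 0) (𝓝 (f 0)) := hf 0 self_mem_Ici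
      rw [h0] at hf0
      exact hf0.comp hdiv
  simpa using h

end InverseMarginalDisutility

/-- A continuous strictly decreasing function on `(0, ∞)` attains each value strictly between its
limits at `∞` and `0⁺` exactly once. -/
theorem existsUnique_pos_eq_of_strictAntiOn {F : ℝ → ℝ} {u v c : ℝ}
    (hcont : ContinuousOn F (Ioi 0)) (hanti : StrictAntiOn F (Ioi 0))
    (hzero : Tendsto F (𝓝[>] 0) (𝓝 v)) (htop : Tendsto F atTop (𝓝 u))
    (huc : u < c) (hcv : c < v) : ∃! a : ℝ, 0 < a ∧ F a = c := by
  obtain ⟨a, hca, ha⟩ := ((hzero.eventually_const_lt hcv).and self_mem_nhdsWithin).exists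
  obtain ⟨b, hbc, hb⟩ := ((htop.eventually_lt_const huc).and (eventually_gt_atTop 0)).exists
  obtain ⟨x, hx, hxc⟩ := isPreconnected_Ioi.intermediate_value hb ha hcont ⟨hbc.le, hca.le⟩
  exact ⟨x, ⟨hx, hxc⟩, fun y hy => hanti.injOn hy.1 hx (hy.2.trans hxc.symm)⟩

/-- well-definedness of φ₂: for a strictly increasing `J` with
`J(0)=0`, a random variable `S` valued in `A` with `P(S>0)=1`, and
`0 < E[X_i] < M_i`, the map `α ↦ E[I_i(J(S)/α)]` is continuous and strictly
decreasing on `(0,∞)`, tends to `M_i` at `0⁺` and to `0` at `∞`; hence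
`E[I_i(J(S)/α_i)] = E[X_i]` has a unique solution `α_i > 0`. -/
theorem stmt_5
    (n : ℕ) (hn : 1 ≤ n) (M : Fin n → ℝ) (hM : ∀ i, 0 < M i)
    (I : Fin n → ℝ → ℝ)
    (hIcont : ∀ i, ContinuousOn (I i) (Ici 0))
    (hImono : ∀ i, StrictMonoOn (I i) (Ici 0))
    (hI0 : ∀ i, I i 0 = 0)
    (hIlt : ∀ i z, 0 ≤ z → I i z < M i)
    (hIlim : ∀ i, Tendsto (I i) atTop (𝓝 (M i)))
    (Ω : Type*) [MeasurableSpace Ω] (P : Measure Ω) [IsProbabilityMeasure P]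
    (S : Ω → ℝ) (hSmeas : Measurable S)
    (hSA : ∀ᵐ ω ∂P, S ω ∈ Ico 0 (∑ i, M i))
    (hSpos : ∀ᵐ ω ∂P, 0 < S ω)
    (J : ℝ → ℝ) (hJmeas : Measurable J)
    (hJmono : StrictMonoOn J (Ico 0 (∑ i, M i)))
    (hJnonneg : ∀ s ∈ Ico 0 (∑ i, M i), 0 ≤ J s)
    (hJ0 : J 0 = 0)
    (i : Fin n) (X : Ω → ℝ) (hXint : Integrable X P)
    (hEX : 0 < ∫ ω, X ω ∂P ∧ ∫ ω, X ω ∂P < M i) :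
    ContinuousOn (fun a : ℝ => ∫ ω, I i (J (S ω) / a) ∂P) (Ioi 0) ∧
    StrictAntiOn (fun a : ℝ => ∫ ω, I i (J (S ω) / a) ∂P) (Ioi 0) ∧
    Tendsto (fun a : ℝ => ∫ ω, I i (J (S ω) / a) ∂P) (𝓝[>] 0) (𝓝 (M i)) ∧
    Tendsto (fun a : ℝ => ∫ ω, I i (J (S ω) / a) ∂P) atTop (𝓝 0) ∧
    ∃! a : ℝ, 0 < a ∧ ∫ ω, I i (J (S ω) / a) ∂P = ∫ ω, X ω ∂P := by
  have hpos : ∀ᵐ ω ∂P, 0 < J (S ω) := by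
    filter_upwards [hSA, hSpos] with ω hA hS
    simpa only [hJ0] using hJmono ⟨le_rfl, hS.trans hA.2⟩ hA hS
  have hY : AEMeasurable (fun ω => J (S ω)) P := (hJmeas.comp hSmeas).aemeasurable
  have hcont := continuousOn_integral_comp_div (hIcont i) (hImono i) (hI0 i) (hIlt i) hY hpos
  have hanti := strictAntiOn_integral_comp_div (hIcont i) (hImono i) (hI0 i) (hIlt i) hY hpos
  have hzero := tendsto_integral_comp_div_nhdsGT_zero (hIcont i) (hImono i) (hI0 i) (hIlt i)
    (hIlim i) hY hpos
  have htop := tendsto_integral_comp_div_atTop (hIcont i) (hImono i) (hI0 i) (hIlt i) hY hpos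
  exact ⟨hcont, hanti, hzero, htop,
    existsUnique_pos_eq_of_strictAntiOn hcont hanti hzero htop hEX.1 hEX.2⟩
end

section
/- (Strict monotonicity of the mapping φ₂, part of Lemma 3.8.) Let S be a random variable taking values in A, let J₁, J₂ : A → [0, ∞) be measurable functions with J₁(s) ≥ J₂(s) for all s ∈ A and P(J₁(S) > J₂(S)) > 0, and let i ∈ {1, …, n}. If α¹_i > 0 and α²_i > 0 satisfy E[I_i(J₁(S)/α¹_i)] = E[X_i] and E[I_i(J₂(S)/α²_i)] = E[X_i], then α¹_i > α²_i. -/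
open Set Filter Topology MeasureTheory

/-- A bounded increasing function on `[0, ∞)`, composed with an a.e. nonnegative random variable,
is integrable. -/
theorem integrable_comp_of_monotoneOn_Ici {Ω : Type*} [MeasurableSpace Ω] {P : Measure Ω}
    [IsFiniteMeasure P] {f : ℝ → ℝ} {C : ℝ} (hcont : ContinuousOn f (Ici 0))
    (hmono : MonotoneOn f (Ici 0)) (h0 : f 0 = 0) (hlt : ∀ z, 0 ≤ z → f z < C)
    {Y : Ω → ℝ} (hY : Measurable Y) (hY0 : ∀ᵐ ω ∂P, 0 ≤ Y ω) :
    Integrable (fun ω => f (Y ω)) P := by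
  have hmax : Continuous fun y : ℝ => f (max y 0) :=
    hcont.comp_continuous (by fun_prop) fun y => le_max_right y 0
  have hae : (fun ω => f (max (Y ω) 0)) =ᵐ[P] fun ω => f (Y ω) := by
    filter_upwards [hY0] with ω hω
    rw [max_eq_left hω]
  refine Integrable.congr (Integrable.of_bound (C := C)
    (hmax.measurable.comp hY).aestronglyMeasurable (ae_of_all _ fun ω => ?_)) hae
  have hnonneg : (0 : ℝ) ≤ max (Y ω) 0 := le_max_right _ _
  have hf : 0 ≤ f (max (Y ω) 0) :=
    h0.ge.trans (hmono self_mem_Ici hnonneg hnonneg)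
  simpa only [Function.comp_apply, Real.norm_of_nonneg hf] using (hlt _ hnonneg).le

/-- strict monotonicity of φ₂, part of Lemma 3.8: if `J₁ ≥ J₂`
on `A` with `P(J₁(S) > J₂(S)) > 0`, and `α¹_i, α²_i > 0` both solve the
fairness equation for `J₁` resp. `J₂`, then `α¹_i > α²_i`. -/
theorem stmt_6
    (n : ℕ) (hn : 1 ≤ n) (M : Fin n → ℝ) (hM : ∀ i, 0 < M i)
    (I : Fin n → ℝ → ℝ)
    (hIcont : ∀ i, ContinuousOn (I i) (Ici 0))
    (hImono : ∀ i, StrictMonoOn (I i) (Ici 0))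
    (hI0 : ∀ i, I i 0 = 0)
    (hIlt : ∀ i z, 0 ≤ z → I i z < M i)
    (hIlim : ∀ i, Tendsto (I i) atTop (𝓝 (M i)))
    (Ω : Type*) [MeasurableSpace Ω] (P : Measure Ω) [IsProbabilityMeasure P]
    (S : Ω → ℝ) (hSmeas : Measurable S)
    (hSA : ∀ᵐ ω ∂P, S ω ∈ Ico 0 (∑ i, M i))
    (J₁ J₂ : ℝ → ℝ) (hJ₁meas : Measurable J₁) (hJ₂meas : Measurable J₂)
    (hJ₁nonneg : ∀ s ∈ Ico 0 (∑ i, M i), 0 ≤ J₁ s)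
    (hJ₂nonneg : ∀ s ∈ Ico 0 (∑ i, M i), 0 ≤ J₂ s)
    (hle : ∀ s ∈ Ico 0 (∑ i, M i), J₂ s ≤ J₁ s)
    (hstrict : 0 < P {ω | J₂ (S ω) < J₁ (S ω)})
    (i : Fin n) (X : Ω → ℝ) (hXint : Integrable X P)
    (α₁ α₂ : ℝ) (hα₁ : 0 < α₁) (hα₂ : 0 < α₂)
    (hfair₁ : ∫ ω, I i (J₁ (S ω) / α₁) ∂P = ∫ ω, X ω ∂P)
    (hfair₂ : ∫ ω, I i (J₂ (S ω) / α₂) ∂P = ∫ ω, X ω ∂P) :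
    α₂ < α₁ := by
  by_contra! hα
  have hY₁ : ∀ᵐ ω ∂P, 0 ≤ J₁ (S ω) / α₁ := by
    filter_upwards [hSA] with ω hω using div_nonneg (hJ₁nonneg _ hω) hα₁.le
  have hY₂ : ∀ᵐ ω ∂P, 0 ≤ J₂ (S ω) / α₂ := by
    filter_upwards [hSA] with ω hω using div_nonneg (hJ₂nonneg _ hω) hα₂.le
  have hint₁ := integrable_comp_of_monotoneOn_Ici (hIcont i) (hImono i).monotoneOn (hI0 i)
    (hIlt i) ((hJ₁meas.comp hSmeas).div_const α₁) hY₁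
  have hint₂ := integrable_comp_of_monotoneOn_Ici (hIcont i) (hImono i).monotoneOn (hI0 i)
    (hIlt i) ((hJ₂meas.comp hSmeas).div_const α₂) hY₂
  have hmono : (fun ω => I i (J₂ (S ω) / α₂)) ≤ᵐ[P] fun ω => I i (J₁ (S ω) / α₁) := by
    filter_upwards [hSA, hY₁, hY₂] with ω hω h₁ h₂
    exact (hImono i).monotoneOn h₂ h₁ (div_le_div₀ (hJ₁nonneg _ hω) (hle _ hω) hα₁ hα)
  have heq := (integral_eq_iff_of_ae_le hint₂ hint₁ hmono).1 (hfair₂.trans hfair₁.symm)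
  refine hstrict.ne' (measure_eq_zero_iff_ae_notMem.2 ?_)
  filter_upwards [hSA, hY₁, hY₂, heq] with ω hω h₁ h₂ he hlt
  have hlt' : J₂ (S ω) < J₁ (S ω) := hlt
  refine ((hImono i) h₂ h₁ ?_).ne he
  calc J₂ (S ω) / α₂ ≤ J₂ (S ω) / α₁ := div_le_div_of_nonneg_left (hJ₂nonneg _ hω) hα₁ hα
    _ < J₁ (S ω) / α₁ := div_lt_div_of_pos_right hlt' hα₁
end

section
/- (Sequential continuity of the mapping φ₂, part of Lemma 3.8.) Let S be a random variable taking values in A, let (J_k)_{k≥1} and J be measurable functions from A to [0, ∞) such that J_k(S) → J(S) almost surely as k → ∞ and J(S) > 0 almost surely, and let i ∈ {1, …, n} with 0 < E[X_i] < M_i. Let α^k_i > 0 and α_i > 0 be the unique positive solutions of E[I_i(J_k(S)/α^k_i)] = E[X_i] and E[I_i(J(S)/α_i)] = E[X_i]. Then α^k_i → α_i as k → ∞. -/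
open Set Filter Topology MeasureTheory

section ScaledExpectation

variable {Ω : Type*} [MeasurableSpace Ω] {P : Measure Ω} [IsProbabilityMeasure P]
  {g : ℝ → ℝ} {C : ℝ}

lemma integrable_comp_div_s7 (hg : Continuous g) (hC : ∀ z, |g z| ≤ C)
    {Y : Ω → ℝ} (hY : Measurable Y) (b : ℝ) :
    Integrable (fun ω => g (Y ω / b)) P :=
  Integrable.of_bound (hg.measurable.comp (hY.div_const b)).aestronglyMeasurable C
    (ae_of_all _ fun _ => hC _)

lemma integral_comp_div_anti (hg : Continuous g) (hC : ∀ z, |g z| ≤ C) (hmono : Monotone g)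
    {Y : Ω → ℝ} (hY : Measurable Y) (hY0 : ∀ᵐ ω ∂P, 0 ≤ Y ω) {a b : ℝ} (ha : 0 < a)
    (hab : a ≤ b) : ∫ ω, g (Y ω / b) ∂P ≤ ∫ ω, g (Y ω / a) ∂P := by
  refine integral_mono_ae (integrable_comp_div_s7 hg hC hY b) (integrable_comp_div_s7 hg hC hY a) ?_
  filter_upwards [hY0] with ω hω
  exact hmono (div_le_div_of_nonneg_left hω ha hab)

lemma integral_comp_div_strictAnti (hg : Continuous g) (hC : ∀ z, |g z| ≤ C)
    (hmono : StrictMonoOn g (Ici 0)) {Y : Ω → ℝ} (hY : Measurable Y)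
    (hY0 : ∀ᵐ ω ∂P, 0 < Y ω) {a b : ℝ} (ha : 0 < a) (hab : a < b) :
    ∫ ω, g (Y ω / b) ∂P < ∫ ω, g (Y ω / a) ∂P := by
  have hlt : ∀ᵐ ω ∂P, g (Y ω / b) < g (Y ω / a) := by
    filter_upwards [hY0] with ω hω
    exact hmono (div_pos hω (ha.trans hab)).le (div_pos hω ha).le
      (div_lt_div_of_pos_left hω ha hab)
  have hib := integrable_comp_div_s7 (P := P) hg hC hY b
  have hia := integrable_comp_div_s7 (P := P) hg hC hY a
  have hle := hlt.mono fun _ => le_of_lt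
  refine lt_of_le_of_ne (integral_mono_ae hib hia hle) fun heq => ?_
  have hae := (integral_eq_iff_of_ae_le hib hia hle).1 heq
  obtain ⟨ω, hω, hω'⟩ := (hlt.and hae).exists
  exact hω.ne hω'

lemma tendsto_integral_comp_div_s7 (hg : Continuous g) (hC : ∀ z, |g z| ≤ C)
    {Yk : ℕ → Ω → ℝ} {Y : Ω → ℝ} (hYk : ∀ k, Measurable (Yk k))
    (hlim : ∀ᵐ ω ∂P, Tendsto (fun k => Yk k ω) atTop (𝓝 (Y ω))) (b : ℝ) :
    Tendsto (fun k => ∫ ω, g (Yk k ω / b) ∂P) atTop (𝓝 (∫ ω, g (Y ω / b) ∂P)) := by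
  refine tendsto_integral_of_dominated_convergence (fun _ => C)
    (fun k => (integrable_comp_div_s7 hg hC (hYk k) b).aestronglyMeasurable)
    (integrable_const C) (fun _ => ae_of_all _ fun _ => hC _) ?_
  filter_upwards [hlim] with ω hω
  exact (hg.tendsto _).comp (hω.div_const b)

/-- Scale parameters normalising the expectation of a bounded increasing function to a fixed
value depend continuously on the scaled random variable. -/
lemma tendsto_scale_of_integral_comp_div_eq (hg : Continuous g) (hC : ∀ z, |g z| ≤ C)
    (hmono : Monotone g) (hstrict : StrictMonoOn g (Ici 0))
    {Yk : ℕ → Ω → ℝ} {Y : Ω → ℝ} (hYk : ∀ k, Measurable (Yk k)) (hY : Measurable Y)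
    (hYk0 : ∀ k, ∀ᵐ ω ∂P, 0 ≤ Yk k ω) (hY0 : ∀ᵐ ω ∂P, 0 < Y ω)
    (hlim : ∀ᵐ ω ∂P, Tendsto (fun k => Yk k ω) atTop (𝓝 (Y ω)))
    {ak : ℕ → ℝ} {a c : ℝ} (hak : ∀ k, 0 < ak k) (ha : 0 < a)
    (hck : ∀ k, ∫ ω, g (Yk k ω / ak k) ∂P = c) (hc : ∫ ω, g (Y ω / a) ∂P = c) :
    Tendsto ak atTop (𝓝 a) := by
  refine tendsto_order.2 ⟨fun b hb => ?_, fun b hb => ?_⟩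
  · rcases le_or_gt b 0 with hb0 | hb0
    · exact Eventually.of_forall fun k => hb0.trans_lt (hak k)
    have hlt := integral_comp_div_strictAnti hg hC hstrict hY hY0 hb0 hb
    rw [hc] at hlt
    filter_upwards [(tendsto_integral_comp_div_s7 hg hC hYk hlim b).eventually_const_lt hlt]
      with k hk
    by_contra! h
    have := integral_comp_div_anti hg hC hmono (hYk k) (hYk0 k) (hak k) h
    rw [hck k] at this
    exact this.not_gt hk
  · have hlt := integral_comp_div_strictAnti hg hC hstrict hY hY0 ha hb
    rw [hc] at hlt
    filter_upwards [(tendsto_integral_comp_div_s7 hg hC hYk hlim b).eventually_lt_const hlt]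
      with k hk
    by_contra! h
    have := integral_comp_div_anti hg hC hmono (hYk k) (hYk0 k) (ha.trans hb) h
    rw [hck k] at this
    exact this.not_gt hk

end ScaledExpectation

/-- sequential continuity of φ₂, part of Lemma 3.8: if
`J_k(S) → J(S)` a.s. with `J(S) > 0` a.s., then the solutions `α^k_i` of the
fairness equations converge to the solution `α_i` for `J`. -/
theorem stmt_7
    (n : ℕ) (hn : 1 ≤ n) (M : Fin n → ℝ) (hM : ∀ i, 0 < M i)
    (I : Fin n → ℝ → ℝ)
    (hIcont : ∀ i, ContinuousOn (I i) (Ici 0))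
    (hImono : ∀ i, StrictMonoOn (I i) (Ici 0))
    (hI0 : ∀ i, I i 0 = 0)
    (hIlt : ∀ i z, 0 ≤ z → I i z < M i)
    (hIlim : ∀ i, Tendsto (I i) atTop (𝓝 (M i)))
    (Ω : Type*) [MeasurableSpace Ω] (P : Measure Ω) [IsProbabilityMeasure P]
    (S : Ω → ℝ) (hSmeas : Measurable S)
    (hSA : ∀ᵐ ω ∂P, S ω ∈ Ico 0 (∑ i, M i))
    (Jk : ℕ → ℝ → ℝ) (J : ℝ → ℝ)
    (hJkmeas : ∀ k, Measurable (Jk k)) (hJmeas : Measurable J)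
    (hJknonneg : ∀ k, ∀ s ∈ Ico 0 (∑ i, M i), 0 ≤ Jk k s)
    (hJnonneg : ∀ s ∈ Ico 0 (∑ i, M i), 0 ≤ J s)
    (hconv : ∀ᵐ ω ∂P, Tendsto (fun k => Jk k (S ω)) atTop (𝓝 (J (S ω))))
    (hJpos : ∀ᵐ ω ∂P, 0 < J (S ω))
    (i : Fin n) (X : Ω → ℝ) (hXint : Integrable X P)
    (hEX : 0 < ∫ ω, X ω ∂P ∧ ∫ ω, X ω ∂P < M i)
    (αk : ℕ → ℝ) (α : ℝ) (hαk : ∀ k, 0 < αk k) (hα : 0 < α)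
    (hfairk : ∀ k, ∫ ω, I i (Jk k (S ω) / αk k) ∂P = ∫ ω, X ω ∂P)
    (hfair : ∫ ω, I i (J (S ω) / α) ∂P = ∫ ω, X ω ∂P) :
    Tendsto αk atTop (𝓝 α) := by
  have hcoe : ∀ z, 0 ≤ z → I i (max z 0) = I i z := fun z hz => by rw [max_eq_left hz]
  have hcont : Continuous fun z => I i (max z 0) :=
    (hIcont i).comp_continuous (by fun_prop) fun z => le_max_right z 0
  have hmono : Monotone fun z => I i (max z 0) := fun x y hxy =>
    (hImono i).monotoneOn (le_max_right x 0) (le_max_right y 0) (max_le_max_right 0 hxy)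
  have hstrict : StrictMonoOn (fun z => I i (max z 0)) (Ici 0) :=
    (hImono i).congr fun z hz => (hcoe z hz).symm
  have hbound : ∀ z, |I i (max z 0)| ≤ M i := fun z => by
    rw [abs_of_nonneg]
    · exact (hIlt i _ (le_max_right z 0)).le
    · exact (hI0 i).symm.le.trans
        ((hImono i).monotoneOn self_mem_Ici (le_max_right z 0) (le_max_right z 0))
  have hYk0 : ∀ k, ∀ᵐ ω ∂P, 0 ≤ Jk k (S ω) := fun k => hSA.mono fun ω hω => hJknonneg k _ hω
  refine tendsto_scale_of_integral_comp_div_eq (c := ∫ ω, X ω ∂P) hcont hbound hmono hstrict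
    (fun k => (hJkmeas k).comp hSmeas) (hJmeas.comp hSmeas) hYk0 hJpos hconv hαk hα
    (fun k => ?_) ?_
  · rw [← hfairk k]
    exact integral_congr_ae ((hYk0 k).mono fun ω hω => hcoe _ (div_nonneg hω (hαk k).le))
  · rw [← hfair]
    exact integral_congr_ae (hJpos.mono fun ω hω => hcoe _ (div_nonneg hω.le hα.le))
end

section
/- (Lemma 3.9.) Let S be a random variable taking values in A with P(S > 0) = 1, and let (J_k)_{k≥1} be a sequence of measurable functions from A to [0, ∞) such that J_k(s) → ∞ as k → ∞ for every s ∈ A with s > 0. For each i ∈ {1, …, n} with 0 < E[X_i] < M_i, let α^k_i > 0 satisfy E[I_i(J_k(S)/α^k_i)] = E[X_i]. Then α^k_i → ∞ as k → ∞ for every such i. -/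
open Set Filter Topology MeasureTheory

/-- For a bounded measurable `g` and random variables `Y k` that diverge almost surely, the
expectations of `g (Y k / c)` tend to the limit of `g` at infinity. -/
lemma tendsto_integral_comp_div_of_tendsto_atTop {Ω : Type*} [MeasurableSpace Ω]
    {P : Measure Ω} [IsProbabilityMeasure P] {g : ℝ → ℝ} {b L c : ℝ} (hg : Measurable g)
    (hbound : ∀ z, |g z| ≤ b) (hlim : Tendsto g atTop (𝓝 L)) (hc : 0 < c)
    {Y : ℕ → Ω → ℝ} (hY : ∀ k, Measurable (Y k))
    (hYlim : ∀ᵐ ω ∂P, Tendsto (fun k => Y k ω) atTop atTop) :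
    Tendsto (fun k => ∫ ω, g (Y k ω / c) ∂P) atTop (𝓝 L) := by
  have h : Tendsto (fun k => ∫ ω, g (Y k ω / c) ∂P) atTop (𝓝 (∫ _, L ∂P)) := by
    refine tendsto_integral_of_dominated_convergence (fun _ => b)
      (fun k => (hg.comp ((hY k).div_const c)).aestronglyMeasurable)
      (integrable_const b) (fun k => .of_forall fun ω => hbound _) ?_
    filter_upwards [hYlim] with ω hω
    exact hlim.comp (hω.atTop_div_const hc)
  simpa using h

/-- If the random variables `Y k ≥ 0` diverge almost surely and the expectation of
`g (Y k / a k)` stays at a level `m` below the limit of `g`, then the scales `a k` diverge. -/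
lemma tendsto_atTop_of_integral_comp_div_eq {Ω : Type*} [MeasurableSpace Ω]
    {P : Measure Ω} [IsProbabilityMeasure P] {g : ℝ → ℝ} {b L m : ℝ} (hg : Monotone g)
    (hbound : ∀ z, |g z| ≤ b) (hlim : Tendsto g atTop (𝓝 L)) (hm : m < L)
    {Y : ℕ → Ω → ℝ} (hY : ∀ k, Measurable (Y k)) (hYnonneg : ∀ k, ∀ᵐ ω ∂P, 0 ≤ Y k ω)
    (hYlim : ∀ᵐ ω ∂P, Tendsto (fun k => Y k ω) atTop atTop)
    {a : ℕ → ℝ} (ha : ∀ k, 0 < a k) (heq : ∀ k, ∫ ω, g (Y k ω / a k) ∂P = m) :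
    Tendsto a atTop atTop := by
  have hint : ∀ k c, Integrable (fun ω => g (Y k ω / c)) P := fun k c =>
    .of_bound (hg.measurable.comp ((hY k).div_const c)).aestronglyMeasurable b
      (.of_forall fun ω => hbound _)
  refine (atTop_basis_Ioi' 0).tendsto_right_iff.2 fun c hc => ?_
  filter_upwards [(tendsto_integral_comp_div_of_tendsto_atTop hg.measurable hbound hlim hc hY
    hYlim).eventually_const_lt hm] with k hk
  by_contra hac
  refine hk.not_ge ((heq k).symm ▸ integral_mono_ae (hint k c) (hint k (a k)) ?_)
  filter_upwards [hYnonneg k] with ω hω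
  exact hg (div_le_div_of_nonneg_left hω (ha k) (not_lt.1 hac))

/-- Lemma 3.9: if `J_k(s) → ∞` for every `s ∈ A` with `s > 0`
and `P(S > 0) = 1`, then the solutions `α^k_i` of the fairness equations tend
to infinity, for every `i` with `0 < E[X_i] < M_i`. -/
theorem stmt_8
    (n : ℕ) (hn : 1 ≤ n) (M : Fin n → ℝ) (hM : ∀ i, 0 < M i)
    (I : Fin n → ℝ → ℝ)
    (hIcont : ∀ i, ContinuousOn (I i) (Ici 0))
    (hImono : ∀ i, StrictMonoOn (I i) (Ici 0))
    (hI0 : ∀ i, I i 0 = 0)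
    (hIlt : ∀ i z, 0 ≤ z → I i z < M i)
    (hIlim : ∀ i, Tendsto (I i) atTop (𝓝 (M i)))
    (Ω : Type*) [MeasurableSpace Ω] (P : Measure Ω) [IsProbabilityMeasure P]
    (S : Ω → ℝ) (hSmeas : Measurable S)
    (hSA : ∀ᵐ ω ∂P, S ω ∈ Ico 0 (∑ i, M i))
    (hSpos : ∀ᵐ ω ∂P, 0 < S ω)
    (Jk : ℕ → ℝ → ℝ) (hJkmeas : ∀ k, Measurable (Jk k))
    (hJknonneg : ∀ k, ∀ s ∈ Ico 0 (∑ i, M i), 0 ≤ Jk k s)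
    (hJkinf : ∀ s ∈ Ico 0 (∑ i, M i), 0 < s →
      Tendsto (fun k => Jk k s) atTop atTop)
    (i : Fin n) (X : Ω → ℝ) (hXint : Integrable X P)
    (hEX : 0 < ∫ ω, X ω ∂P ∧ ∫ ω, X ω ∂P < M i)
    (αk : ℕ → ℝ) (hαkpos : ∀ k, 0 < αk k)
    (hfairk : ∀ k, ∫ ω, I i (Jk k (S ω) / αk k) ∂P = ∫ ω, X ω ∂P) :
    Tendsto αk atTop atTop := by
  have hmem : ∀ z : ℝ, max 0 z ∈ Ici (0 : ℝ) := fun z => le_max_left 0 z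
  have hYnonneg : ∀ k, ∀ᵐ ω ∂P, 0 ≤ Jk k (S ω) := fun k => by
    filter_upwards [hSA] with ω hω using hJknonneg k _ hω
  refine tendsto_atTop_of_integral_comp_div_eq (P := P) (g := fun z => I i (max 0 z)) (b := M i)
    (Y := fun k ω => Jk k (S ω))
    (fun x y hxy => (hImono i).monotoneOn (hmem x) (hmem y) (max_le_max_left 0 hxy))
    (fun z => ?_) ?_ hEX.2 (fun k => (hJkmeas k).comp hSmeas) hYnonneg ?_ hαkpos (fun k => ?_)
  · have h0 : 0 ≤ I i (max 0 z) := by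
      simpa [hI0] using (hImono i).monotoneOn self_mem_Ici (hmem z) (hmem z)
    rw [abs_of_nonneg h0]
    exact (hIlt i _ (hmem z)).le
  · exact (hIlim i).comp (tendsto_atTop_mono (fun z => le_max_right 0 z) tendsto_id)
  · filter_upwards [hSA, hSpos] with ω h1 h2 using hJkinf _ h1 h2
  · rw [← hfairk k]
    refine integral_congr_ae ?_
    filter_upwards [hYnonneg k] with ω hω
    simp only [max_eq_right (div_nonneg hω (hαkpos k).le)]
end

section
/- (Proposition 3.10: the only eigenvalue with a positive eigenvector is 1.) Let X_1, …, X_n be nonnegative integrable random variables with P(Σ X_i > 0) > 0, set S = Σ_{i=1}^n X_i, and assume P(S ∈ A) = 1. Suppose α ∈ ℝ_{>0}^n, λ > 0, and a measurable function J : A → [0, ∞) satisfy: (i) Σ_{i=1}^n I_i(J(s)/α_i) = s for every s ∈ A, and (ii) E[I_i(J(S)/(λ α_i))] = E[X_i] for every i ∈ {1, …, n}. Then λ = 1. -/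
open Set Filter Topology MeasureTheory

/-- A function continuous on `[0, ∞)`, nonnegative there and bounded above by `m`, is integrable
when composed with an almost surely nonnegative random variable. -/
theorem integrable_comp_of_continuousOn_Ici {Ω : Type*} [MeasurableSpace Ω] {P : Measure Ω}
    [IsFiniteMeasure P] {f : ℝ → ℝ} {m : ℝ} (hf : ContinuousOn f (Ici 0))
    (hf_nonneg : ∀ z, 0 ≤ z → 0 ≤ f z) (hf_le : ∀ z, 0 ≤ z → f z ≤ m)
    {Y : Ω → ℝ} (hY : Measurable Y) (hY_nonneg : ∀ᵐ ω ∂P, 0 ≤ Y ω) :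
    Integrable (fun ω => f (Y ω)) P := by
  have hcont : Continuous fun z => f (max z 0) :=
    hf.comp_continuous (by fun_prop) fun z => le_max_right z 0
  have hint : Integrable (fun ω => f (max (Y ω) 0)) P := by
    refine Integrable.of_bound (hcont.measurable.comp hY).aestronglyMeasurable m ?_
    refine Eventually.of_forall fun ω => ?_
    rw [Real.norm_of_nonneg (hf_nonneg _ (le_max_right _ _))]
    exact hf_le _ (le_max_right _ _)
  refine hint.congr ?_
  filter_upwards [hY_nonneg] with ω hω
  rw [max_eq_left hω]

/-- Almost everywhere ordered integrable functions, the order being strict on a set of positive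
measure, have strictly ordered integrals. -/
theorem integral_lt_integral_of_ae_le_of_lt_on {Ω : Type*} [MeasurableSpace Ω] {P : Measure Ω}
    {f g : Ω → ℝ} {s : Set Ω} (hf : Integrable f P) (hg : Integrable g P) (hle : f ≤ᵐ[P] g)
    (hs : 0 < P s) (hlt : ∀ᵐ ω ∂P, ω ∈ s → f ω < g ω) :
    ∫ ω, f ω ∂P < ∫ ω, g ω ∂P := by
  refine lt_of_le_of_ne (integral_mono_ae hf hg hle) fun heq => hs.ne' ?_
  have hfg := (integral_eq_iff_of_ae_le hf hg hle).1 heq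
  refine measure_eq_zero_iff_ae_notMem.2 ?_
  filter_upwards [hfg, hlt] with ω h₁ h₂ hω
  exact (h₂ hω).ne h₁

/-- Proposition 3.10: if `(α, J)` satisfies the feasibility
condition and `λ·α` satisfies the fairness condition, then `λ = 1`. -/
theorem stmt_9
    (n : ℕ) (hn : 1 ≤ n) (M : Fin n → ℝ) (hM : ∀ i, 0 < M i)
    (I : Fin n → ℝ → ℝ)
    (hIcont : ∀ i, ContinuousOn (I i) (Ici 0))
    (hImono : ∀ i, StrictMonoOn (I i) (Ici 0))
    (hI0 : ∀ i, I i 0 = 0)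
    (hIlt : ∀ i z, 0 ≤ z → I i z < M i)
    (hIlim : ∀ i, Tendsto (I i) atTop (𝓝 (M i)))
    (Ω : Type*) [MeasurableSpace Ω] (P : Measure Ω) [IsProbabilityMeasure P]
    (X : Fin n → Ω → ℝ) (hXmeas : ∀ i, Measurable (X i))
    (hXnonneg : ∀ i, ∀ᵐ ω ∂P, 0 ≤ X i ω)
    (hXint : ∀ i, Integrable (X i) P)
    (hposS : 0 < P {ω | 0 < ∑ i, X i ω})
    (hSA : ∀ᵐ ω ∂P, (∑ i, X i ω) ∈ Ico 0 (∑ i, M i))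
    (α : Fin n → ℝ) (hα : ∀ i, 0 < α i) (l : ℝ) (hl : 0 < l)
    (J : ℝ → ℝ) (hJmeas : Measurable J)
    (hJnonneg : ∀ s ∈ Ico 0 (∑ i, M i), 0 ≤ J s)
    (hfeas : ∀ s ∈ Ico 0 (∑ i, M i), ∑ i, I i (J s / α i) = s)
    (hfair : ∀ i, ∫ ω, I i (J (∑ j, X j ω) / (l * α i)) ∂P = ∫ ω, X i ω ∂P) :
    l = 1 := by
  have : Nonempty (Fin n) := ⟨⟨0, hn⟩⟩
  let S : Ω → ℝ := fun ω => ∑ i, X i ω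
  have hSmeas : Measurable S := Finset.measurable_fun_sum _ fun i _ => hXmeas i
  have hI_nonneg : ∀ i z, 0 ≤ z → 0 ≤ I i z := fun i z hz =>
    (hI0 i).symm.le.trans ((hImono i).monotoneOn self_mem_Ici hz hz)
  have hint : ∀ c, 0 < c → ∀ i, Integrable (fun ω => I i (J (S ω) / (c * α i))) P := by
    intro c hc i
    refine integrable_comp_of_continuousOn_Ici (hIcont i) (hI_nonneg i)
      (fun z hz => (hIlt i z hz).le) ((hJmeas.comp hSmeas).div_const _) ?_
    filter_upwards [hSA] with ω hω
    exact div_nonneg (hJnonneg _ hω) (mul_pos hc (hα i)).le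
  let F : ℝ → Ω → ℝ := fun c ω => ∑ i, I i (J (S ω) / (c * α i))
  have hFint : ∀ c, 0 < c → Integrable (F c) P := fun c hc =>
    integrable_finsetSum _ fun i _ => hint c hc i
  have hF_one : F 1 =ᵐ[P] S := by
    filter_upwards [hSA] with ω hω
    simpa only [F, one_mul] using hfeas _ hω
  have hF_l : ∫ ω, F l ω ∂P = ∫ ω, F 1 ω ∂P := by
    rw [integral_congr_ae hF_one, integral_finsetSum _ fun i _ => hint l hl i,
      integral_finsetSum _ fun i _ => hXint i]
    exact Finset.sum_congr rfl fun i _ => hfair i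
  have hF_lt : ∀ a b, 0 < a → a < b → ∫ ω, F b ω ∂P < ∫ ω, F a ω ∂P := by
    intro a b ha hab
    have hb := ha.trans hab
    refine integral_lt_integral_of_ae_le_of_lt_on (hFint b hb) (hFint a ha) ?_ hposS ?_
    · filter_upwards [hSA] with ω hω
      have hJ := hJnonneg _ hω
      refine Finset.sum_le_sum fun i _ => (hImono i).monotoneOn
        (div_nonneg hJ (mul_pos hb (hα i)).le) (div_nonneg hJ (mul_pos ha (hα i)).le) ?_
      exact div_le_div_of_nonneg_left hJ (mul_pos ha (hα i))
        (mul_le_mul_of_nonneg_right hab.le (hα i).le)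
    · filter_upwards [hSA] with ω hω hpos
      have hJ : 0 < J (S ω) := by
        refine lt_of_le_of_ne (hJnonneg _ hω) fun h => ne_of_gt hpos ?_
        rw [← hfeas _ hω]
        refine Finset.sum_eq_zero fun i _ => ?_
        change I i (J (S ω) / α i) = 0
        rw [← h, zero_div, hI0]
      refine Finset.sum_lt_sum_of_nonempty Finset.univ_nonempty fun i _ => hImono i
        (div_pos hJ (mul_pos hb (hα i))).le (div_pos hJ (mul_pos ha (hα i))).le ?_
      exact div_lt_div_of_pos_left hJ (mul_pos ha (hα i)) (mul_lt_mul_of_pos_right hab (hα i))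
  rcases lt_trichotomy l 1 with h | h | h
  · exact absurd hF_l (hF_lt l 1 hl h).ne'
  · exact h
  · exact absurd hF_l (hF_lt 1 l one_pos h).ne
end

section
/- (Oshime's theorem, Theorem 3.2.) Let φ : ℝ_{≥0}^n → ℝ_{≥0}^n be continuous, monotone (x ≤ y componentwise implies φ(x) ≤ φ(y) componentwise), positively homogeneous of degree 1 (φ(λx) = λφ(x) for all λ > 0), and non-sectional. Then there exist λ* > 0 and s* ∈ ℝ_{>0}^n with φ(s*) = λ* s*; moreover, if λ > 0 and s ∈ ℝ_{>0}^n satisfy φ(s) = λ s, then s is a positive scalar multiple of s*. -/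
open Set Filter Topology

/-- A mapping `φ` of the nonnegative cone of `ℝ^n` is *non-sectional* if for
every decomposition of the index set into complementary nonempty subsets `Q`
and `R = Qᶜ` there exists `q ∈ Q` such that simultaneously:
(1) `φ(w)_q > φ(y)_q` whenever `w_i > y_i` for all `i ∈ R` and
    `w_i = y_i > 0` for all `i ∈ Q`; and
(2) `φ(w^k)_q → ∞` for every sequence `(w^k)` in the nonnegative cone with
    `w^k_i → ∞` for each `i ∈ R` while `w^k_i` is fixed and positive for each
    `i ∈ Q`. -/
def NonSectional {n : ℕ} (φ : (Fin n → ℝ) → Fin n → ℝ) : Prop :=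
  ∀ Q : Finset (Fin n), Q.Nonempty → Qᶜ.Nonempty →
    ∃ q ∈ Q,
      (∀ w y : Fin n → ℝ, (∀ i, 0 ≤ w i) → (∀ i, 0 ≤ y i) →
        (∀ i ∉ Q, y i < w i) → (∀ i ∈ Q, w i = y i ∧ 0 < y i) →
        φ y q < φ w q) ∧
      (∀ w : ℕ → Fin n → ℝ, (∀ k i, 0 ≤ w k i) →
        (∀ i ∉ Q, Tendsto (fun k => w k i) atTop atTop) →
        (∀ i ∈ Q, ∃ c : ℝ, 0 < c ∧ ∀ k, w k i = c) →
        Tendsto (fun k => φ (w k) q) atTop atTop)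

/-- If a vector of a family with `φ x ≤ L • x` and `1 ≤ x` has its coordinates in `Q` bounded by
`B`, then non-sectionality bounds one further coordinate, uniformly over the family. -/
lemma NonSectional.exists_bound_of_notMem {n : ℕ} {φ : (Fin n → ℝ) → Fin n → ℝ}
    (hns : NonSectional φ)
    (hmono : ∀ x y : Fin n → ℝ, (∀ i, 0 ≤ x i) → (∀ i, x i ≤ y i) → ∀ i, φ x i ≤ φ y i)
    {L : ℝ} (hL : 0 ≤ L) (B : ℝ) (Q : Finset (Fin n)) (hQ : Q.Nonempty) (hQc : Qᶜ.Nonempty) :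
    ∃ K : ℝ, ∀ x : Fin n → ℝ, (∀ i, 1 ≤ x i) → (∀ i, φ x i ≤ L * x i) → (∀ i ∈ Q, x i ≤ B) →
      ∃ i ∉ Q, x i ≤ K := by
  classical
  obtain ⟨q, hq, -, htend⟩ := hns Q hQ hQc
  have hlim := htend (fun k i => if i ∈ Q then 1 else (k : ℝ))
    (fun k i => by split_ifs <;> positivity)
    (fun i hi => by simpa [hi] using tendsto_natCast_atTop_atTop)
    (fun i hi => ⟨1, one_pos, fun k => by simp [hi]⟩)
  obtain ⟨k, hk⟩ := (hlim.eventually_gt_atTop (L * B)).exists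
  refine ⟨k, fun x hx hφ hB => ?_⟩
  by_contra! hfar
  have hle := hmono (fun i => if i ∈ Q then 1 else (k : ℝ)) x
    (fun i => by split_ifs <;> positivity)
    (fun i => by
      by_cases hi : i ∈ Q
      · simpa [hi] using hx i
      · simpa [hi] using (hfar i hi).le) q
  have := mul_le_mul_of_nonneg_left (hB q hq) hL
  linarith [hφ q]

/-- The vectors with minimal coordinate `1` and `φ x ≤ L • x` are uniformly bounded. -/
lemma NonSectional.exists_bound {n : ℕ} {φ : (Fin n → ℝ) → Fin n → ℝ}
    (hns : NonSectional φ)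
    (hmono : ∀ x y : Fin n → ℝ, (∀ i, 0 ≤ x i) → (∀ i, x i ≤ y i) → ∀ i, φ x i ≤ φ y i)
    {L : ℝ} (hL : 0 ≤ L) :
    ∃ B : ℝ, ∀ x : Fin n → ℝ, (∀ i, 1 ≤ x i) → (∃ i, x i = 1) → (∀ i, φ x i ≤ L * x i) →
      ∀ i, x i ≤ B := by
  classical
  have key : ∀ m : ℕ, ∃ B : ℝ, ∀ x : Fin n → ℝ, (∀ i, 1 ≤ x i) → (∃ i, x i = 1) →
      (∀ i, φ x i ≤ L * x i) → ∃ Q : Finset (Fin n), Q.Nonempty ∧ min n m ≤ Q.card ∧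
        ∀ i ∈ Q, x i ≤ B := by
    intro m
    induction m with
    | zero =>
      refine ⟨1, fun x _ ⟨i, hi⟩ _ => ⟨{i}, by simp, by simp, by simp [hi]⟩⟩
    | succ m ih =>
      obtain ⟨B, hB⟩ := ih
      have hK : ∀ Q : Finset (Fin n), ∃ K : ℝ, Q.Nonempty → Qᶜ.Nonempty →
          ∀ x : Fin n → ℝ, (∀ i, 1 ≤ x i) → (∀ i, φ x i ≤ L * x i) → (∀ i ∈ Q, x i ≤ B) →
            ∃ i ∉ Q, x i ≤ K := by
        intro Q
        by_cases hQ : Q.Nonempty ∧ Qᶜ.Nonempty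
        · obtain ⟨K, hK⟩ := hns.exists_bound_of_notMem hmono hL B Q hQ.1 hQ.2
          exact ⟨K, fun _ _ => hK⟩
        · exact ⟨0, fun h₁ h₂ => absurd ⟨h₁, h₂⟩ hQ⟩
      choose K hK using hK
      obtain ⟨M, hM⟩ := (Set.finite_range K).bddAbove
      refine ⟨max B M, fun x hx hone hφ => ?_⟩
      obtain ⟨Q, hQ, hcard, hQB⟩ := hB x hx hone hφ
      rcases Finset.eq_empty_or_nonempty Qᶜ with hQc | hQc
      · rw [Finset.compl_eq_empty_iff] at hQc
        exact ⟨Q, hQ, by simp [hQc], fun i hi => (hQB i hi).trans (le_max_left _ _)⟩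
      · obtain ⟨i, hi, hiK⟩ := hK Q hQ hQc x hx hφ hQB
        refine ⟨insert i Q, by simp, ?_, ?_⟩
        · rw [Finset.card_insert_of_notMem hi]
          omega
        · intro j hj
          rcases Finset.mem_insert.1 hj with rfl | hj
          · exact (hiK.trans (hM ⟨Q, rfl⟩)).trans (le_max_right _ _)
          · exact (hQB j hj).trans (le_max_left _ _)
  obtain ⟨B, hB⟩ := key n
  refine ⟨B, fun x hx hone hφ i => ?_⟩
  obtain ⟨Q, -, hcard, hQB⟩ := hB x hx hone hφ
  have hQ : Q = Finset.univ := by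
    rw [← Finset.card_eq_iff_eq_univ, Fintype.card_fin]
    exact le_antisymm (by simpa using Finset.card_le_univ Q) (by simpa using hcard)
  exact hQB i (by simp [hQ])

/-- The upper Collatz–Wielandt number is attained at a positive vector. -/
lemma NonSectional.exists_min_superEigenvector {n : ℕ} (hn : 0 < n)
    {φ : (Fin n → ℝ) → Fin n → ℝ}
    (hns : NonSectional φ)
    (hmaps : ∀ x : Fin n → ℝ, (∀ i, 0 ≤ x i) → ∀ i, 0 ≤ φ x i)
    (hcont : ContinuousOn φ {x : Fin n → ℝ | ∀ i, 0 ≤ x i})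
    (hmono : ∀ x y : Fin n → ℝ, (∀ i, 0 ≤ x i) → (∀ i, x i ≤ y i) → ∀ i, φ x i ≤ φ y i)
    (hhom : ∀ l : ℝ, 0 < l → ∀ x : Fin n → ℝ, (∀ i, 0 ≤ x i) →
      φ (fun i => l * x i) = fun i => l * φ x i) :
    ∃ (r : ℝ) (x : Fin n → ℝ), (∀ i, 0 < x i) ∧ (∀ i, φ x i ≤ r * x i) ∧
      ∀ (l : ℝ) (y : Fin n → ℝ), (∀ i, 0 < y i) → (∀ i, φ y i ≤ l * y i) → r ≤ l := by
  have : Nonempty (Fin n) := ⟨⟨0, hn⟩⟩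
  have hone : ∀ i, 0 ≤ φ (fun _ => 1) i := hmaps _ fun _ => zero_le_one
  set L : ℝ := ∑ i, φ (fun _ => 1) i
  have hL : 0 ≤ L := Finset.sum_nonneg fun i _ => hone i
  have hφone : ∀ i, φ (fun _ => 1) i ≤ L * 1 := fun i => by
    rw [mul_one]
    exact Finset.single_le_sum (fun j _ => hone j) (Finset.mem_univ i)
  obtain ⟨B, hB⟩ := hns.exists_bound hmono hL
  set box : Set (ℝ × (Fin n → ℝ)) := Icc 0 L ×ˢ Icc (fun _ => 1) (fun _ => B)
  have hbox : IsCompact box := isCompact_Icc.prod isCompact_Icc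
  set A : Set (ℝ × (Fin n → ℝ)) := {p ∈ box | φ p.2 ≤ fun i => p.1 * p.2 i}
  have hAclosed : IsClosed A := by
    refine hbox.isClosed.isClosed_le ?_ (by fun_prop)
    exact hcont.comp continuousOn_snd fun p hp i => zero_le_one.trans (hp.2.1 i)
  have hA : IsCompact A := hbox.of_isClosed_subset hAclosed fun p hp => hp.1
  have hmemA : ∀ (l : ℝ) (y : Fin n → ℝ), l ≤ L → (∀ i, 1 ≤ y i) → (∃ i, y i = 1) →
      (∀ i, φ y i ≤ l * y i) → (l, y) ∈ A := by
    intro l y hl hy ⟨j, hj⟩ hφ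
    have hl0 : 0 ≤ l := by
      have h := (hmaps y (fun i => zero_le_one.trans (hy i)) j).trans (hφ j)
      rwa [hj, mul_one] at h
    refine ⟨⟨⟨hl0, hl⟩, hy, hB y hy ⟨j, hj⟩ fun i => (hφ i).trans ?_⟩, hφ⟩
    exact mul_le_mul_of_nonneg_right hl (zero_le_one.trans (hy i))
  have hAne : A.Nonempty :=
    ⟨_, hmemA L (fun _ => 1) le_rfl (fun _ => le_rfl) ⟨⟨0, hn⟩, rfl⟩ hφone⟩
  obtain ⟨⟨r, x⟩, hrx, hmin⟩ := hA.exists_isMinOn hAne continuousOn_fst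
  refine ⟨r, x, fun i => one_pos.trans_le (hrx.1.2.1 i), hrx.2, fun l y hy hφ => ?_⟩
  rcases le_total L l with hl | hl
  · exact hrx.1.1.2.trans hl
  · obtain ⟨j, hj⟩ := Finite.exists_min y
    have hyj := hy j
    refine hmin (hmemA l (fun i => (y j)⁻¹ * y i) hl (fun i => ?_) ⟨j, ?_⟩ fun i => ?_)
    · rw [inv_mul_eq_div, one_le_div hyj]
      exact hj i
    · exact inv_mul_cancel₀ hyj.ne'
    · rw [hhom _ (inv_pos.2 hyj) y fun i => (hy i).le, mul_left_comm]
      exact mul_le_mul_of_nonneg_left (hφ i) (inv_pos.2 hyj).le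

/-- A positive vector attaining the upper Collatz–Wielandt number can be replaced by one for which
fewer of the defining inequalities are tight, unless it is an eigenvector. -/
lemma NonSectional.exists_tight_ssubset {n : ℕ} {φ : (Fin n → ℝ) → Fin n → ℝ}
    (hns : NonSectional φ)
    (hmono : ∀ x y : Fin n → ℝ, (∀ i, 0 ≤ x i) → (∀ i, x i ≤ y i) → ∀ i, φ x i ≤ φ y i)
    {r : ℝ} {x : Fin n → ℝ} (hx : ∀ i, 0 < x i) (hφ : ∀ i, φ x i ≤ r * x i)
    {Q : Finset (Fin n)} (hQ : ∀ i, i ∈ Q ↔ φ x i = r * x i)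
    (hQne : Q.Nonempty) (hQc : Qᶜ.Nonempty) :
    ∃ y : Fin n → ℝ, (∀ i, 0 < y i) ∧ (∀ i, φ y i ≤ r * y i) ∧
      ∃ q ∈ Q, φ y q < r * y q ∧ ∀ i ∉ Q, φ y i < r * y i := by
  classical
  have hev : ∀ᶠ t : ℝ in 𝓝[<] 1, ∀ i, i ∉ Q → φ x i < r * (t * x i) := by
    refine eventually_all.2 fun i => ?_
    by_cases hi : i ∈ Q
    · simp [hi]
    · have hlt : φ x i < r * (1 * x i) := by
        rw [one_mul]
        exact lt_of_le_of_ne (hφ i) fun h => hi ((hQ i).2 h)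
      have hc : ContinuousAt (fun t : ℝ => r * (t * x i)) 1 := by fun_prop
      filter_upwards [nhdsWithin_le_nhds (hc.eventually (lt_mem_nhds hlt))] with t ht _ using ht
  obtain ⟨t, ht, ht0, ht1⟩ :=
    (hev.and (Ioo_mem_nhdsLT (zero_lt_one' ℝ))).exists
  set y : Fin n → ℝ := fun i => if i ∈ Q then x i else t * x i with hy
  have hyQ : ∀ i ∈ Q, y i = x i := fun i hi => by simp [hy, hi]
  have hyR : ∀ i ∉ Q, y i = t * x i := fun i hi => by simp [hy, hi]
  have hypos : ∀ i, 0 < y i := fun i => by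
    by_cases hi : i ∈ Q
    · rw [hyQ i hi]; exact hx i
    · rw [hyR i hi]; exact mul_pos ht0 (hx i)
  have hlt : ∀ i ∉ Q, y i < x i := fun i hi => by
    rw [hyR i hi]
    exact mul_lt_of_lt_one_left (hx i) ht1
  have hyx : ∀ i, y i ≤ x i := fun i => by
    by_cases hi : i ∈ Q
    · exact (hyQ i hi).le
    · exact (hlt i hi).le
  have hφyx := hmono y x (fun i => (hypos i).le) hyx
  have hR : ∀ i ∉ Q, φ y i < r * y i := fun i hi => by
    rw [hyR i hi]
    exact (hφyx i).trans_lt (ht i hi)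
  obtain ⟨q, hq, hstrict, -⟩ := hns Q hQne hQc
  refine ⟨y, hypos, fun i => ?_, q, hq, ?_, hR⟩
  · by_cases hi : i ∈ Q
    · rw [hyQ i hi]
      exact (hφyx i).trans (hφ i)
    · exact (hR i hi).le
  · rw [hyQ q hq]
    exact (hstrict x y (fun i => (hx i).le) (fun i => (hypos i).le) hlt
      fun i hi => ⟨(hyQ i hi).symm, hypos i⟩).trans_le (hφ q)

/-- The upper Collatz–Wielandt number is an eigenvalue with a positive eigenvector. -/
lemma NonSectional.exists_eigenvector_of_min {n : ℕ} (hn : 0 < n)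
    {φ : (Fin n → ℝ) → Fin n → ℝ} (hns : NonSectional φ)
    (hmono : ∀ x y : Fin n → ℝ, (∀ i, 0 ≤ x i) → (∀ i, x i ≤ y i) → ∀ i, φ x i ≤ φ y i)
    {r : ℝ} (hmin : ∀ (l : ℝ) (y : Fin n → ℝ), (∀ i, 0 < y i) → (∀ i, φ y i ≤ l * y i) → r ≤ l)
    {x : Fin n → ℝ} (hx : ∀ i, 0 < x i) (hφ : ∀ i, φ x i ≤ r * x i) :
    ∃ s : Fin n → ℝ, (∀ i, 0 < s i) ∧ φ s = fun i => r * s i := by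
  classical
  have : Nonempty (Fin n) := ⟨⟨0, hn⟩⟩
  induction hQ : Finset.univ.filter (fun i => φ x i = r * x i) using
    Finset.strongInduction generalizing x with
  | H Q ih =>
    have hmem : ∀ i, i ∈ Q ↔ φ x i = r * x i := fun i => by simp [← hQ]
    rcases Finset.eq_empty_or_nonempty Qᶜ with hQc | hQc
    · rw [Finset.compl_eq_empty_iff] at hQc
      exact ⟨x, hx, funext fun i => (hmem i).1 (by simp [hQc])⟩
    rcases Finset.eq_empty_or_nonempty Q with hQe | hQne
    · obtain ⟨j, hj⟩ := Finite.exists_max fun i => φ x i / x i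
      have hr : r ≤ φ x j / x j := hmin _ x hx fun i => (div_le_iff₀ (hx i)).1 (hj i)
      have hjQ : j ∈ Q := (hmem j).2 (le_antisymm (hφ j) ((le_div_iff₀ (hx j)).1 hr))
      simp [hQe] at hjQ
    · obtain ⟨y, hy, hφy, q, hq, hqlt, hR⟩ :=
        hns.exists_tight_ssubset hmono hx hφ hmem hQne hQc
      refine ih _ ?_ hy hφy rfl
      refine (Finset.ssubset_iff_of_subset fun i hi => ?_).2 ⟨q, hq, by simp [hqlt.ne]⟩
      by_contra hiQ
      exact (hR i hiQ).ne (by simpa using hi)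

/-- The eigenvalue of a positive eigenvector is at most the eigenvalue of any other
positive eigenvector. -/
lemma eigenvalue_le_of_pos {n : ℕ} (hn : 0 < n) {φ : (Fin n → ℝ) → Fin n → ℝ}
    (hmono : ∀ x y : Fin n → ℝ, (∀ i, 0 ≤ x i) → (∀ i, x i ≤ y i) → ∀ i, φ x i ≤ φ y i)
    (hhom : ∀ l : ℝ, 0 < l → ∀ x : Fin n → ℝ, (∀ i, 0 ≤ x i) →
      φ (fun i => l * x i) = fun i => l * φ x i)
    {l r : ℝ} {s x : Fin n → ℝ} (hs : ∀ i, 0 < s i) (hx : ∀ i, 0 < x i)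
    (hφs : φ s = fun i => l * s i) (hφx : φ x = fun i => r * x i) : l ≤ r := by
  have : Nonempty (Fin n) := ⟨⟨0, hn⟩⟩
  obtain ⟨j, hj⟩ := Finite.exists_max fun i => s i / x i
  have hle := hmono s (fun i => s j / x j * x i) (fun i => (hs i).le)
    (fun i => (div_le_iff₀ (hx i)).1 (hj i)) j
  rw [hhom _ (div_pos (hs j) (hx j)) x fun i => (hx i).le, hφs, hφx] at hle
  have heq : s j / x j * (r * x j) = r * s j := by
    have := (hx j).ne'
    field_simp
  dsimp only at hle
  rw [heq] at hle
  exact le_of_mul_le_mul_right hle (hs j)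

/-- Positive eigenvectors with a common eigenvalue are proportional. -/
lemma NonSectional.eigenvector_unique {n : ℕ} (hn : 0 < n) {φ : (Fin n → ℝ) → Fin n → ℝ}
    (hns : NonSectional φ)
    (hhom : ∀ l : ℝ, 0 < l → ∀ x : Fin n → ℝ, (∀ i, 0 ≤ x i) →
      φ (fun i => l * x i) = fun i => l * φ x i)
    {r : ℝ} {s x : Fin n → ℝ} (hs : ∀ i, 0 < s i) (hx : ∀ i, 0 < x i)
    (hφs : φ s = fun i => r * s i) (hφx : φ x = fun i => r * x i) :
    ∃ c : ℝ, 0 < c ∧ s = fun i => c * x i := by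
  classical
  have : Nonempty (Fin n) := ⟨⟨0, hn⟩⟩
  obtain ⟨j, hj⟩ := Finite.exists_min fun i => s i / x i
  set c := s j / x j
  have hc0 : 0 < c := div_pos (hs j) (hx j)
  have hle : ∀ i, c * x i ≤ s i := fun i => (le_div_iff₀ (hx i)).1 (hj i)
  set Q : Finset (Fin n) := Finset.univ.filter fun i => s i = c * x i with hQ
  have hmem : ∀ i, i ∈ Q ↔ s i = c * x i := fun i => by simp [hQ]
  have hQne : Q.Nonempty := ⟨j, (hmem j).2 (div_mul_cancel₀ _ (hx j).ne').symm⟩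
  refine ⟨c, hc0, funext fun i => (hmem i).1 ?_⟩
  by_contra hi
  obtain ⟨q, hq, hstrict, -⟩ := hns Q hQne ⟨i, Finset.mem_compl.2 hi⟩
  have hlt := hstrict s (fun i => c * x i) (fun i => (hs i).le)
    (fun i => (mul_pos hc0 (hx i)).le)
    (fun k hk => lt_of_le_of_ne (hle k) fun h => hk ((hmem k).2 h.symm))
    (fun k hk => ⟨(hmem k).1 hk, mul_pos hc0 (hx k)⟩)
  rw [hhom c hc0 x fun i => (hx i).le, hφs, hφx] at hlt
  dsimp only at hlt
  rw [(hmem q).1 hq, mul_left_comm] at hlt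
  exact lt_irrefl _ hlt

/-- In dimension at least two the eigenvalue of a positive eigenvector is positive. -/
lemma NonSectional.eigenvalue_pos {n : ℕ} (hn : 2 ≤ n) {φ : (Fin n → ℝ) → Fin n → ℝ}
    (hns : NonSectional φ)
    (hmaps : ∀ x : Fin n → ℝ, (∀ i, 0 ≤ x i) → ∀ i, 0 ≤ φ x i)
    {r : ℝ} {x : Fin n → ℝ} (hx : ∀ i, 0 < x i) (hφx : φ x = fun i => r * x i) : 0 < r := by
  classical
  have : Nontrivial (Fin n) := Fin.nontrivial_iff_two_le.2 hn
  obtain ⟨a, b, hab⟩ := exists_pair_ne (Fin n)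
  obtain ⟨q, -, hstrict, -⟩ :=
    hns {a} (Finset.singleton_nonempty a) ⟨b, by simpa using hab.symm⟩
  set y : Fin n → ℝ := fun i => if i ∈ ({a} : Finset (Fin n)) then x i else 0 with hy
  have hy0 : ∀ i, 0 ≤ y i := fun i => by
    simp only [hy]
    split_ifs
    exacts [(hx i).le, le_rfl]
  have hlt := hstrict x y (fun i => (hx i).le) hy0
    (fun i hi => by simpa only [hy, if_neg hi] using hx i)
    (fun i hi => by simpa only [hy, if_pos hi, true_and] using hx i)
  have hpos := (hmaps y hy0 q).trans_lt hlt
  rw [hφx] at hpos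
  exact pos_of_mul_pos_left hpos (hx q).le

/-- Oshime's theorem: a continuous, monotone, positively
homogeneous and non-sectional self-map of the nonnegative cone has a positive
eigenvector, unique up to positive scalar multiples, with positive
eigenvalue. -/
theorem stmt_11
    (n : ℕ) (hn : 2 ≤ n)
    (φ : (Fin n → ℝ) → Fin n → ℝ)
    (hmaps : ∀ x : Fin n → ℝ, (∀ i, 0 ≤ x i) → ∀ i, 0 ≤ φ x i)
    (hcont : ContinuousOn φ {x : Fin n → ℝ | ∀ i, 0 ≤ x i})
    (hmono : ∀ x y : Fin n → ℝ, (∀ i, 0 ≤ x i) → (∀ i, x i ≤ y i) →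
      ∀ i, φ x i ≤ φ y i)
    (hhom : ∀ l : ℝ, 0 < l → ∀ x : Fin n → ℝ, (∀ i, 0 ≤ x i) →
      φ (fun i => l * x i) = fun i => l * φ x i)
    (hns : NonSectional φ) :
    ∃ (lstar : ℝ) (sstar : Fin n → ℝ), 0 < lstar ∧ (∀ i, 0 < sstar i) ∧
      φ sstar = (fun i => lstar * sstar i) ∧
      ∀ (l : ℝ) (s : Fin n → ℝ), 0 < l → (∀ i, 0 < s i) →
        φ s = (fun i => l * s i) →
        ∃ c : ℝ, 0 < c ∧ s = fun i => c * sstar i := by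
  have hn0 : 0 < n := by omega
  obtain ⟨r, x, hx, hφx, hmin⟩ :=
    hns.exists_min_superEigenvector hn0 hmaps hcont hmono hhom
  obtain ⟨s, hs, hφs⟩ := hns.exists_eigenvector_of_min hn0 hmono hmin hx hφx
  refine ⟨r, s, hns.eigenvalue_pos hn hmaps hs hφs, hs, hφs, fun l z _ hz hφz => ?_⟩
  obtain rfl : l = r := le_antisymm (eigenvalue_le_of_pos hn0 hmono hhom hz hs hφz hφs)
    (eigenvalue_le_of_pos hn0 hmono hhom hs hz hφs hφz)
  exact hns.eigenvector_unique hn0 hhom hz hs hφz hφs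
end

section
/- (Lemma 4.4: homogeneous strongly monotone maps are contractive in the Hilbert metric.) Let φ : ℝ_{>0}^n → ℝ_{>0}^n be positively homogeneous of degree 1 (φ(λx) = λφ(x) for all λ > 0 and x ∈ ℝ_{>0}^n) and strongly monotone (if x ≤ y componentwise and x ≠ y, then φ(x)_i < φ(y)_i for every i). Then for all w, y ∈ ℝ_{>0}^n with d(w, y) > 0, one has d(φ(w), φ(y)) < d(w, y), where d is the Hilbert metric. -/
open Set Filter Topology

/-- The Hilbert (projective) metric on the positive cone of `ℝ^n`:
`d(w, y) = log( max_i (w_i / y_i) / min_i (w_i / y_i) )`. -/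
noncomputable def hilbertDist {n : ℕ} [NeZero n] (w y : Fin n → ℝ) : ℝ :=
  Real.log ((⨆ i, w i / y i) / (⨅ i, w i / y i))

/-- Lemma 4.4: a positively homogeneous, strongly monotone
self-map of the positive cone is contractive with respect to the Hilbert
metric. -/
theorem stmt_12
    (n : ℕ) [NeZero n]
    (φ : (Fin n → ℝ) → Fin n → ℝ)
    (hmaps : ∀ x : Fin n → ℝ, (∀ i, 0 < x i) → ∀ i, 0 < φ x i)
    (hhom : ∀ l : ℝ, 0 < l → ∀ x : Fin n → ℝ, (∀ i, 0 < x i) →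
      φ (fun i => l * x i) = fun i => l * φ x i)
    (hsmono : ∀ x y : Fin n → ℝ, (∀ i, 0 < x i) → (∀ i, 0 < y i) →
      (∀ i, x i ≤ y i) → x ≠ y → ∀ i, φ x i < φ y i) :
    ∀ w y : Fin n → ℝ, (∀ i, 0 < w i) → (∀ i, 0 < y i) →
      0 < hilbertDist w y →
      hilbertDist (φ w) (φ y) < hilbertDist w y := by
  intro w y hw hy hd
  obtain ⟨a, ha⟩ := exists_eq_ciSup_of_finite (f := fun i => w i / y i)
  obtain ⟨b, hb⟩ := exists_eq_ciInf_of_finite (f := fun i => w i / y i)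
  obtain ⟨c, hc⟩ := exists_eq_ciSup_of_finite (f := fun i => φ w i / φ y i)
  obtain ⟨e, he⟩ := exists_eq_ciInf_of_finite (f := fun i => φ w i / φ y i)
  have hmax : ∀ i, w i / y i ≤ w a / y a := fun i =>
    (le_ciSup (Set.finite_range fun i => w i / y i).bddAbove i).trans_eq ha.symm
  have hmin : ∀ i, w b / y b ≤ w i / y i := fun i =>
    hb.trans_le (ciInf_le (Set.finite_range fun i => w i / y i).bddBelow i)
  unfold hilbertDist at hd ⊢
  rw [← ha, ← hb] at hd ⊢
  rw [← hc, ← he]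
  have hM : 0 < w a / y a := div_pos (hw a) (hy a)
  have hm : 0 < w b / y b := div_pos (hw b) (hy b)
  have hlt : w b / y b < w a / y a := by
    refine lt_of_le_of_ne (hmax b) fun h => ?_
    rw [h, div_self hM.ne', Real.log_one] at hd
    exact lt_irrefl _ hd
  have hup : φ w c / φ y c < w a / y a := by
    have h := hsmono w (fun i => w a / y a * y i) hw (fun i => mul_pos hM (hy i))
      (fun i => (div_le_iff₀ (hy i)).1 (hmax i))
      (fun h => ((div_lt_iff₀ (hy b)).1 hlt).ne (congrFun h b)) c
    rw [hhom _ hM y hy] at h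
    exact (div_lt_iff₀ (hmaps y hy c)).2 h
  have hlo : w b / y b < φ w e / φ y e := by
    have h := hsmono (fun i => w b / y b * y i) w (fun i => mul_pos hm (hy i)) hw
      (fun i => (le_div_iff₀ (hy i)).1 (hmin i))
      (fun h => ((lt_div_iff₀ (hy a)).1 hlt).ne (congrFun h a)) e
    rw [hhom _ hm y hy] at h
    exact (lt_div_iff₀ (hmaps y hy e)).2 h
  have hc0 : 0 < φ w c / φ y c := div_pos (hmaps w hw c) (hmaps y hy c)
  exact Real.log_lt_log (div_pos hc0 (hm.trans hlo)) (div_lt_div₀ hup hlo.le hM.le hm)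
end

section
/- (Nadler's theorem, Theorem 4.3.) Let (𝒳, d) be a locally compact and connected metric space, and let f : 𝒳 → 𝒳 be a contractive mapping, i.e. d(f(x), f(y)) < d(x, y) whenever x ≠ y, which possesses a fixed point x* ∈ 𝒳. Then for every x ∈ 𝒳 the sequence of iterates (f^{(k)}(x))_{k≥1} converges to x*. -/
open Filter Topology

section Contractive

variable {X : Type*} [MetricSpace X] {f : X → X}

theorem lipschitzWith_one_of_contractive
    (hf : ∀ x y : X, x ≠ y → dist (f x) (f y) < dist x y) : LipschitzWith 1 f := by
  refine LipschitzWith.of_dist_le_mul fun x y => ?_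
  rcases eq_or_ne x y with rfl | h
  · simp
  · simpa using (hf x y h).le

theorem LipschitzWith.dist_iterate_le (hf : LipschitzWith 1 f) (k : ℕ) (x y : X) :
    dist (f^[k] x) (f^[k] y) ≤ dist x y := by
  simpa using (hf.iterate k).dist_le_mul x y

theorem LipschitzWith.antitone_dist_iterate (hf : LipschitzWith 1 f) {p : X} (hp : f p = p)
    (x : X) : Antitone fun k => dist (f^[k] x) p := by
  refine antitone_nat_of_succ_le fun k => ?_
  simpa [Function.iterate_succ_apply', hp] using hf.dist_le_mul (f^[k] x) p

/-- If an orbit of a contractive map with a fixed point has a cluster point, then the orbit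
converges to the fixed point. -/
theorem tendsto_iterate_of_mapClusterPt
    (hf : ∀ x y : X, x ≠ y → dist (f x) (f y) < dist x y) {p : X} (hp : f p = p) {x y : X}
    (hy : MapClusterPt y atTop fun k => f^[k] x) :
    Tendsto (fun k => f^[k] x) atTop (𝓝 p) := by
  have hlip := lipschitzWith_one_of_contractive hf
  have hlim := tendsto_atTop_ciInf (hlip.antitone_dist_iterate hp x)
    ⟨0, by rintro _ ⟨k, rfl⟩; exact dist_nonneg⟩
  set r := ⨅ k, dist (f^[k] x) p
  obtain ⟨φ, hφ, hφy⟩ := hy.tendsto_subseq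
  have hyr : dist y p = r :=
    tendsto_nhds_unique (hφy.dist tendsto_const_nhds) (hlim.comp hφ.tendsto_atTop)
  have hfyr : dist (f y) p = r := by
    refine tendsto_nhds_unique
      (((hlip.continuous.tendsto y).comp hφy).dist tendsto_const_nhds) ?_
    have := ((tendsto_add_atTop_iff_nat 1).2 hlim).comp hφ.tendsto_atTop
    simpa [Function.comp_def, Function.iterate_succ_apply'] using this
  have hyp : y = p := by
    by_contra h
    have := hf y p h
    rw [hp, hfyr, hyr] at this
    exact this.false
  rw [tendsto_iff_dist_tendsto_zero]
  rwa [← hyr, hyp, dist_self] at hlim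

end Contractive

/-- Nadler's theorem: on a locally compact connected metric
space, a contractive self-map possessing a fixed point has globally convergent
iterates towards that fixed point. -/
theorem stmt_13
    (X : Type*) [MetricSpace X] [LocallyCompactSpace X] [ConnectedSpace X]
    (f : X → X)
    (hcontr : ∀ x y : X, x ≠ y → dist (f x) (f y) < dist x y)
    (xstar : X) (hfix : f xstar = xstar) :
    ∀ x : X, Tendsto (fun k => f^[k] x) atTop (𝓝 xstar) := by
  have hlip := lipschitzWith_one_of_contractive hcontr
  obtain ⟨K, hK, hKmem⟩ := exists_compact_mem_nhds xstar
  obtain ⟨ε, hε, hball⟩ := Metric.mem_nhds_iff.1 hKmem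
  have hconv : ∀ x k, dist (f^[k] x) xstar < ε →
      Tendsto (fun k => f^[k] x) atTop (𝓝 xstar) := by
    intro x k hk
    have hev : ∀ᶠ n in atTop, f^[n] x ∈ K := by
      filter_upwards [eventually_ge_atTop k] with n hn
      exact hball ((hlip.antitone_dist_iterate hfix x hn).trans_lt hk)
    obtain ⟨y, -, hy⟩ := hK.exists_mapClusterPt_of_frequently hev.frequently
    exact tendsto_iterate_of_mapClusterPt hcontr hfix hy
  set U := {x | Tendsto (fun k => f^[k] x) atTop (𝓝 xstar)}
  have hnear : ∀ x, ∀ u ∈ U, dist x u < ε / 2 → x ∈ U := by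
    intro x u hu hxu
    obtain ⟨k, hk⟩ := (hu.eventually (Metric.ball_mem_nhds xstar (half_pos hε))).exists
    refine hconv x k ?_
    have h₁ := dist_triangle (f^[k] x) (f^[k] u) xstar
    have h₂ := hlip.dist_iterate_le k x u
    have h₃ : dist (f^[k] u) xstar < ε / 2 := hk
    linarith
  have hclopen : IsClopen U := by
    refine ⟨isClosed_of_closure_subset fun x hx => ?_, Metric.isOpen_iff.2 fun u hu =>
      ⟨ε / 2, half_pos hε, fun x hx => hnear x u hu hx⟩⟩
    obtain ⟨u, hu, hxu⟩ := Metric.mem_closure_iff.1 hx _ (half_pos hε)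
    exact hnear x u hu hxu
  have huniv : U = Set.univ := hclopen.eq_univ ⟨xstar, hconv xstar 0 (by simpa using hε)⟩
  exact fun x => huniv.ge (Set.mem_univ x)
end

section
/- (Corollary 4.6, abstract form: global convergence of the normalized iteration.) Let φ : ℝ_{>0}^n → ℝ_{>0}^n be continuous, positively homogeneous of degree 1 (φ(λx) = λφ(x) for all λ > 0), and strongly monotone (x ≤ y componentwise and x ≠ y imply φ(x)_i < φ(y)_i for every i). Define ψ(s) = φ(s)/‖φ(s)‖₁ on the open unit simplex Δ = { s ∈ ℝ_{>0}^n : Σ_{i=1}^n s_i = 1 }, where ‖v‖₁ = Σ_i |v_i|. Suppose φ has an eigenvector α* ∈ Δ, i.e. φ(α*) = λ* α* for some λ* > 0. Then for every α⁰ ∈ Δ the sequence defined by α^{k+1} = ψ(α^k) converges to α*. -/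
open Set Filter Topology

/-- If `f` converges along `u` and is continuous at a cluster point of `u`, then its value there
is the limit. -/
theorem MapClusterPt.eq_of_tendsto_comp {X Y ι : Type*} [TopologicalSpace X] [TopologicalSpace Y]
    [T2Space Y] {l : Filter ι} {u : ι → X} {y : X} {c : Y} {f : X → Y}
    (hy : MapClusterPt y l u) (hf : ContinuousAt f y) (hc : Tendsto (f ∘ u) l (𝓝 c)) :
    f y = c := by
  have h : ClusterPt (f y) (map (f ∘ u) l) := hy.continuousAt_comp hf
  exact eq_of_nhds_neBot (h.mono hc)

/-- The largest coordinate ratio `max_i x_i / a_i`. -/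
noncomputable def maxRatio {n : ℕ} [NeZero n] (a x : Fin n → ℝ) : ℝ :=
  Finset.univ.sup' Finset.univ_nonempty fun i => x i / a i

section maxRatio

variable {n : ℕ} [NeZero n] {a : Fin n → ℝ}

theorem maxRatio_le_iff (ha : ∀ i, 0 < a i) {x : Fin n → ℝ} {c : ℝ} :
    maxRatio a x ≤ c ↔ ∀ i, x i ≤ c * a i := by
  simp [maxRatio, div_le_iff₀ (ha _)]

theorem maxRatio_lt_iff (ha : ∀ i, 0 < a i) {x : Fin n → ℝ} {c : ℝ} :
    maxRatio a x < c ↔ ∀ i, x i < c * a i := by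
  simp [maxRatio, div_lt_iff₀ (ha _)]

theorem continuous_maxRatio : Continuous (maxRatio a) :=
  Continuous.finset_sup'_apply _ fun i _ => (continuous_apply i).div_const _

end maxRatio

/-- The orbits of a continuous, homogeneous, strongly monotone self-map of the positive cone
with a positive fixed point `a` converge to positive multiples of `a`. -/
theorem exists_tendsto_iterate_smul_of_strongly_monotone {n : ℕ} [NeZero n]
    {T : (Fin n → ℝ) → Fin n → ℝ}
    (hcont : ContinuousOn T {x | ∀ i, 0 < x i})
    (hhom : ∀ l : ℝ, 0 < l → ∀ x : Fin n → ℝ, (∀ i, 0 < x i) → T (l • x) = l • T x)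
    (hsmono : ∀ x y : Fin n → ℝ, (∀ i, 0 < x i) → (∀ i, 0 < y i) → x ≤ y → x ≠ y →
      ∀ i, T x i < T y i)
    {a : Fin n → ℝ} (ha : ∀ i, 0 < a i) (hfix : T a = a)
    {x : Fin n → ℝ} (hx : ∀ i, 0 < x i) :
    ∃ c : ℝ, 0 < c ∧ Tendsto (fun k => T^[k] x) atTop (𝓝 (c • a)) := by
  have hmono : ∀ x y : Fin n → ℝ, (∀ i, 0 < x i) → (∀ i, 0 < y i) → x ≤ y → T x ≤ T y := by
    intro x y hx hy hxy
    rcases eq_or_ne x y with rfl | hne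
    · exact le_rfl
    · exact fun i => (hsmono x y hx hy hxy hne i).le
  have hsmul_pos : ∀ {c : ℝ}, 0 < c → ∀ i, 0 < (c • a) i := fun hc i => mul_pos hc (ha i)
  have hTsmul : ∀ {c : ℝ}, 0 < c → T (c • a) = c • a := fun hc => by rw [hhom _ hc a ha, hfix]
  obtain ⟨m, hm, hmx⟩ : ∃ m : ℝ, 0 < m ∧ m • a ≤ x := by
    obtain ⟨i₀, -, hi₀⟩ := Finset.univ.exists_min_image (fun i => x i / a i)
      Finset.univ_nonempty
    exact ⟨x i₀ / a i₀, div_pos (hx _) (ha _), fun i =>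
      (le_div_iff₀ (ha i)).1 (hi₀ i (Finset.mem_univ i))⟩
  have pos_of_le : ∀ {z : Fin n → ℝ}, m • a ≤ z → ∀ i, 0 < z i :=
    fun hz i => (hsmul_pos hm i).trans_le (hz i)
  have ratio_pos : ∀ {z : Fin n → ℝ}, m • a ≤ z → 0 < maxRatio a z := by
    intro z hz
    by_contra! h
    have h0 := (maxRatio_le_iff ha).1 h 0
    rw [zero_mul] at h0
    exact absurd (pos_of_le hz 0) h0.not_gt
  have le_ratio : ∀ z : Fin n → ℝ, z ≤ maxRatio a z • a :=
    fun z => (maxRatio_le_iff ha).1 le_rfl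
  have hlow : ∀ k, m • a ≤ T^[k] x := by
    intro k
    induction k with
    | zero => exact hmx
    | succ k ih =>
      rw [Function.iterate_succ_apply', ← hTsmul hm]
      exact hmono _ _ (hsmul_pos hm) (pos_of_le ih) ih
  have hanti : Antitone fun k => maxRatio a (T^[k] x) := by
    refine antitone_nat_of_succ_le fun k => (maxRatio_le_iff ha).2 ?_
    have hr := ratio_pos (hlow k)
    have h := hmono _ _ (pos_of_le (hlow k)) (hsmul_pos hr) (le_ratio _)
    rw [hTsmul hr] at h
    rw [Function.iterate_succ_apply']
    exact h
  have hbdd : BddBelow (range fun k => maxRatio a (T^[k] x)) :=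
    ⟨0, by rintro _ ⟨k, rfl⟩; exact (ratio_pos (hlow k)).le⟩
  obtain ⟨c, hc⟩ : ∃ c, Tendsto (fun k => maxRatio a (T^[k] x)) atTop (𝓝 c) :=
    ⟨_, tendsto_atTop_ciInf hanti hbdd⟩
  have hmem : ∀ k, T^[k] x ∈ Icc (m • a) (maxRatio a x • a) := fun k =>
    ⟨hlow k, (maxRatio_le_iff ha).1 (hanti (Nat.zero_le k))⟩
  have hmc : m ≤ c := by
    refine ge_of_tendsto' hc fun k => le_of_mul_le_mul_right ?_ (ha 0)
    exact (hlow k 0).trans (le_ratio _ 0)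
  have hc0 : 0 < c := hm.trans_le hmc
  refine ⟨c, hc0, isCompact_Icc.tendsto_nhds_of_unique_mapClusterPt
    (Eventually.of_forall hmem) fun y hy hclus => ?_⟩
  have hypos := pos_of_le hy.1
  have hopen : IsOpen {x : Fin n → ℝ | ∀ i, 0 < x i} := by
    simp only [ofPred_forall]
    exact isOpen_iInter_of_finite fun i => isOpen_lt continuous_const (continuous_apply i)
  have hfy : maxRatio a y = c := hclus.eq_of_tendsto_comp continuous_maxRatio.continuousAt hc
  have hfTy : maxRatio a (T y) = c := by
    refine hclus.eq_of_tendsto_comp (f := fun z => maxRatio a (T z))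
      (continuous_maxRatio.continuousAt.comp (hcont.continuousAt (hopen.mem_nhds hypos))) ?_
    refine ((tendsto_add_atTop_iff_nat 1).2 hc).congr fun k => ?_
    rw [Function.iterate_succ_apply']
    rfl
  by_contra hne
  have h := hsmono y (c • a) hypos (hsmul_pos hc0) (hfy ▸ le_ratio y) hne
  rw [hTsmul hc0] at h
  exact ((maxRatio_lt_iff ha).2 h).ne hfTy

/-- Corollary 4.6, abstract form: for a continuous, positively
homogeneous, strongly monotone self-map `φ` of the positive cone having an
eigenvector `α*` in the open unit simplex, the normalized iteration
`ψ(s) = φ(s)/‖φ(s)‖₁` converges to `α*` from every starting point in the open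
unit simplex. -/
theorem stmt_14
    (n : ℕ) [NeZero n]
    (φ : (Fin n → ℝ) → Fin n → ℝ)
    (hmaps : ∀ x : Fin n → ℝ, (∀ i, 0 < x i) → ∀ i, 0 < φ x i)
    (hcont : ContinuousOn φ {x : Fin n → ℝ | ∀ i, 0 < x i})
    (hhom : ∀ l : ℝ, 0 < l → ∀ x : Fin n → ℝ, (∀ i, 0 < x i) →
      φ (fun i => l * x i) = fun i => l * φ x i)
    (hsmono : ∀ x y : Fin n → ℝ, (∀ i, 0 < x i) → (∀ i, 0 < y i) →
      (∀ i, x i ≤ y i) → x ≠ y → ∀ i, φ x i < φ y i)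
    (ψ : (Fin n → ℝ) → Fin n → ℝ)
    (hψ : ∀ x : Fin n → ℝ, ψ x = fun i => φ x i / ∑ j, |φ x j|)
    (αstar : Fin n → ℝ) (hαstarpos : ∀ i, 0 < αstar i)
    (hαstarsum : ∑ i, αstar i = 1)
    (lstar : ℝ) (hlstar : 0 < lstar)
    (heig : φ αstar = fun i => lstar * αstar i) :
    ∀ α₀ : Fin n → ℝ, (∀ i, 0 < α₀ i) → ∑ i, α₀ i = 1 →
      Tendsto (fun k => ψ^[k] α₀) atTop (𝓝 αstar) := by
  intro α₀ hα₀ hα₀sum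
  let T : (Fin n → ℝ) → Fin n → ℝ := fun x => lstar⁻¹ • φ x
  have hTapply : ∀ x, T x = lstar⁻¹ • φ x := fun _ => rfl
  have hTpos : ∀ x : Fin n → ℝ, (∀ i, 0 < x i) → ∀ i, 0 < T x i :=
    fun x hx i => mul_pos (inv_pos.2 hlstar) (hmaps x hx i)
  have sum_pos : ∀ x : Fin n → ℝ, (∀ i, 0 < x i) → 0 < ∑ i, x i :=
    fun x hx => Finset.sum_pos (fun i _ => hx i) Finset.univ_nonempty
  obtain ⟨c, hc, hlim⟩ := exists_tendsto_iterate_smul_of_strongly_monotone (T := T)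
    (hcont.const_smul lstar⁻¹)
    (fun l hl x hx => by
      have h : φ (l • x) = l • φ x := hhom l hl x hx
      simp only [hTapply, h, smul_comm l])
    (fun x y hx hy hxy hne i =>
      mul_lt_mul_of_pos_left (hsmono x y hx hy hxy hne i) (inv_pos.2 hlstar))
    hαstarpos
    (by ext i; simp [hTapply, heig, hlstar.ne'])
    hα₀
  have hiterpos : ∀ k i, 0 < T^[k] α₀ i := by
    intro k
    induction k with
    | zero => exact hα₀
    | succ k ih => rw [Function.iterate_succ_apply']; exact hTpos _ ih
  have hiter : ∀ k, ψ^[k] α₀ = (∑ j, T^[k] α₀ j)⁻¹ • T^[k] α₀ := by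
    intro k
    induction k with
    | zero => simp [hα₀sum]
    | succ k ih =>
      have hs := inv_pos.2 (sum_pos _ (hiterpos k))
      have hφ : φ ((∑ j, T^[k] α₀ j)⁻¹ • T^[k] α₀) = (∑ j, T^[k] α₀ j)⁻¹ • φ (T^[k] α₀) :=
        hhom _ hs _ (hiterpos k)
      have hφsum := sum_pos _ (hmaps _ (hiterpos k))
      rw [Function.iterate_succ_apply', Function.iterate_succ_apply', ih, hψ, hφ]
      ext i
      simp only [hTapply, Pi.smul_apply, smul_eq_mul, abs_mul, abs_of_pos hs,
        abs_of_pos (hmaps _ (hiterpos k) _), ← Finset.mul_sum]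
      rw [mul_div_mul_left _ _ hs.ne', mul_inv, inv_inv]
      field_simp
  have hsum : Tendsto (fun k => ∑ j, T^[k] α₀ j) atTop (𝓝 c) := by
    have h := tendsto_finsetSum Finset.univ fun j _ => (tendsto_pi_nhds.1 hlim) j
    simpa [← Finset.mul_sum, hαstarsum] using h
  simpa only [← hiter, inv_smul_smul₀ hc.ne'] using (hsum.inv₀ hc.ne').smul hlim
end

section
/- (Example 2.6 / Appendix A: existence and uniqueness of the fixed-point parameter for the two-participant power-disutility pool.) Let S be a nonnegative integrable random variable with P(S > 0) > 0, and define f(a) = E[ √(aS + (a/2)²) − a/2 ] for a > 0. Then f is strictly increasing on (0, ∞), f(a) → 0 as a → 0⁺, and f(a) → E[S] as a → ∞. Consequently, for every m with 0 < m < E[S] there exists a unique a > 0 such that E[ √(aS + (a/2)²) − a/2 ] = m. -/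
open Set Filter Topology MeasureTheory

/-- `√(as + (a/2)²) − a/2`, the share of the loss `s` borne by participant 2. -/
noncomputable def lossShare (a s : ℝ) : ℝ := √(a * s + (a / 2) ^ 2) - a / 2

lemma lossShare_nonneg {a s : ℝ} (ha : 0 ≤ a) (hs : 0 ≤ s) : 0 ≤ lossShare a s :=
  sub_nonneg.2 <| Real.le_sqrt_of_sq_le (by nlinarith [mul_nonneg ha hs])

lemma lossShare_le {a s : ℝ} (ha : 0 ≤ a) (hs : 0 ≤ s) : lossShare a s ≤ s :=
  sub_le_iff_le_add.2 <| Real.sqrt_le_iff.2 ⟨by positivity, by nlinarith [sq_nonneg s]⟩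

lemma lossShare_lt {a s : ℝ} (ha : 0 ≤ a) (hs : 0 < s) : lossShare a s < s :=
  sub_lt_iff_lt_add.2 <| (Real.sqrt_lt' (by positivity)).2 (by nlinarith [sq_pos_of_pos hs])

lemma lossShare_zero_left (s : ℝ) : lossShare 0 s = 0 := by simp [lossShare]

lemma lossShare_zero_right {a : ℝ} (ha : 0 ≤ a) : lossShare a 0 = 0 := by
  simp [lossShare, Real.sqrt_sq (show 0 ≤ a / 2 by positivity)]

/-- The share is the nonnegative root `h` of `h² + a h = a s`. -/
lemma lossShare_quadratic {a s : ℝ} (ha : 0 ≤ a) (hs : 0 ≤ s) :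
    lossShare a s ^ 2 + a * lossShare a s = a * s := by
  have h := Real.sq_sqrt (show 0 ≤ a * s + (a / 2) ^ 2 by positivity)
  unfold lossShare
  linear_combination h

lemma lossShare_strictMono_left {a b s : ℝ} (ha : 0 ≤ a) (hab : a < b) (hs : 0 < s) :
    lossShare a s < lossShare b s := by
  have hb := ha.trans hab.le
  by_contra! hle
  nlinarith [lossShare_quadratic ha hs.le, lossShare_quadratic hb hs.le,
    lossShare_nonneg ha hs.le, lossShare_nonneg hb hs.le,
    mul_pos (sub_pos.2 hab) (sub_pos.2 (lossShare_lt ha hs)),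
    mul_nonneg hb (sub_nonneg.2 hle), mul_nonneg (add_nonneg (lossShare_nonneg ha hs.le)
      (lossShare_nonneg hb hs.le)) (sub_nonneg.2 hle)]

lemma lossShare_mono_left {a b s : ℝ} (ha : 0 ≤ a) (hab : a < b) (hs : 0 ≤ s) :
    lossShare a s ≤ lossShare b s := by
  rcases hs.eq_or_lt with rfl | hs
  · rw [lossShare_zero_right ha, lossShare_zero_right (ha.trans hab.le)]
  · exact (lossShare_strictMono_left ha hab hs).le

lemma sub_sq_div_le_lossShare {a s : ℝ} (ha : 0 < a) (hs : 0 ≤ s) :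
    s - s ^ 2 / a ≤ lossShare a s := by
  have hsq : lossShare a s ^ 2 ≤ s ^ 2 :=
    pow_le_pow_left₀ (lossShare_nonneg ha.le hs) (lossShare_le ha.le hs) 2
  rw [sub_le_comm, le_div_iff₀ ha]
  linarith [lossShare_quadratic ha.le hs]

lemma tendsto_lossShare_atTop {s : ℝ} (hs : 0 ≤ s) :
    Tendsto (fun a => lossShare a s) atTop (𝓝 s) := by
  have hlow : Tendsto (fun a : ℝ => s - s ^ 2 / a) atTop (𝓝 s) := by
    simpa using (tendsto_const_nhds (x := s)).sub
      ((tendsto_const_nhds (x := s ^ 2)).div_atTop tendsto_id)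
  refine tendsto_of_tendsto_of_tendsto_of_le_of_le' hlow tendsto_const_nhds ?_ ?_
  · filter_upwards [eventually_gt_atTop 0] with a ha using sub_sq_div_le_lossShare ha hs
  · filter_upwards [eventually_gt_atTop 0] with a ha using lossShare_le ha.le hs

lemma continuous_lossShare_left (s : ℝ) : Continuous fun a => lossShare a s := by
  unfold lossShare
  fun_prop

lemma measurable_lossShare_right (a : ℝ) : Measurable (lossShare a) := by
  unfold lossShare
  fun_prop

lemma norm_lossShare_le {a s : ℝ} (ha : 0 ≤ a) (hs : 0 ≤ s) : ‖lossShare a s‖ ≤ s := by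
  rw [Real.norm_of_nonneg (lossShare_nonneg ha hs)]
  exact lossShare_le ha hs

section Expectation

variable {Ω : Type*} [MeasurableSpace Ω] {P : Measure Ω} {S : Ω → ℝ}

lemma integrable_lossShare (hS : Integrable S P) (hS0 : ∀ᵐ ω ∂P, 0 ≤ S ω) {a : ℝ} (ha : 0 ≤ a) :
    Integrable (fun ω => lossShare a (S ω)) P :=
  hS.mono' ((measurable_lossShare_right a).comp_aemeasurable hS.aemeasurable).aestronglyMeasurable
    (hS0.mono fun _ => norm_lossShare_le ha)

lemma strictMonoOn_integral_lossShare (hS : Integrable S P) (hS0 : ∀ᵐ ω ∂P, 0 ≤ S ω)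
    (hSpos : 0 < P {ω | 0 < S ω}) :
    StrictMonoOn (fun a => ∫ ω, lossShare a (S ω) ∂P) (Ici 0) := by
  intro a ha b hb hab
  have hia := integrable_lossShare hS hS0 ha
  have hib := integrable_lossShare hS hS0 hb
  refine sub_pos.1 ?_
  rw [← integral_sub hib hia]
  refine (integral_pos_iff_support_of_nonneg_ae ?_ (hib.sub hia)).2 ?_
  · filter_upwards [hS0] with ω hω using sub_nonneg.2 (lossShare_mono_left ha hab hω)
  · refine hSpos.trans_le (measure_mono fun ω hω => ?_)
    exact (sub_pos.2 (lossShare_strictMono_left ha hab hω)).ne'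

lemma continuousOn_integral_lossShare (hS : Integrable S P) (hS0 : ∀ᵐ ω ∂P, 0 ≤ S ω) :
    ContinuousOn (fun a => ∫ ω, lossShare a (S ω) ∂P) (Ici 0) :=
  continuousOn_of_dominated (fun _ ha => (integrable_lossShare hS hS0 ha).aestronglyMeasurable)
    (fun _ ha => hS0.mono fun _ => norm_lossShare_le ha) hS
    (ae_of_all _ fun ω => (continuous_lossShare_left (S ω)).continuousOn)

lemma tendsto_integral_lossShare_zero (hS : Integrable S P) (hS0 : ∀ᵐ ω ∂P, 0 ≤ S ω) :
    Tendsto (fun a => ∫ ω, lossShare a (S ω) ∂P) (𝓝[>] 0) (𝓝 0) := by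
  have h := (continuousOn_integral_lossShare hS hS0 0 self_mem_Ici).mono Ioi_subset_Ici_self
  simpa [ContinuousWithinAt, lossShare_zero_left] using h

lemma tendsto_integral_lossShare_atTop (hS : Integrable S P) (hS0 : ∀ᵐ ω ∂P, 0 ≤ S ω) :
    Tendsto (fun a => ∫ ω, lossShare a (S ω) ∂P) atTop (𝓝 (∫ ω, S ω ∂P)) := by
  refine tendsto_integral_filter_of_dominated_convergence S ?_ ?_ hS
    (hS0.mono fun _ => tendsto_lossShare_atTop)
  · filter_upwards [eventually_ge_atTop 0] with a ha
      using (integrable_lossShare hS hS0 ha).aestronglyMeasurable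
  · filter_upwards [eventually_ge_atTop 0] with a ha
      using hS0.mono fun _ => norm_lossShare_le ha

end Expectation

/-- Example 2.6 / Appendix A: for a nonnegative integrable
random variable `S` with `P(S > 0) > 0`, the function
`f(a) = E[√(aS + (a/2)²) − a/2]` is strictly increasing on `(0, ∞)`, tends to
`0` at `0⁺` and to `E[S]` at `∞`; hence for every `0 < m < E[S]` there is a
unique `a > 0` with `f(a) = m`. -/
theorem stmt_15
    (Ω : Type*) [MeasurableSpace Ω] (P : Measure Ω) [IsProbabilityMeasure P]
    (S : Ω → ℝ) (hSmeas : Measurable S)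
    (hSnonneg : ∀ᵐ ω ∂P, 0 ≤ S ω)
    (hSint : Integrable S P)
    (hSpos : 0 < P {ω | 0 < S ω}) :
    StrictMonoOn
      (fun a : ℝ => ∫ ω, (Real.sqrt (a * S ω + (a / 2) ^ 2) - a / 2) ∂P)
      (Ioi 0) ∧
    Tendsto (fun a : ℝ => ∫ ω, (Real.sqrt (a * S ω + (a / 2) ^ 2) - a / 2) ∂P)
      (𝓝[>] 0) (𝓝 0) ∧
    Tendsto (fun a : ℝ => ∫ ω, (Real.sqrt (a * S ω + (a / 2) ^ 2) - a / 2) ∂P)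
      atTop (𝓝 (∫ ω, S ω ∂P)) ∧
    ∀ m : ℝ, 0 < m → m < ∫ ω, S ω ∂P →
      ∃! a : ℝ, 0 < a ∧
        ∫ ω, (Real.sqrt (a * S ω + (a / 2) ^ 2) - a / 2) ∂P = m := by
  have hmono := (strictMonoOn_integral_lossShare hSint hSnonneg hSpos).mono Ioi_subset_Ici_self
  have hzero := tendsto_integral_lossShare_zero hSint hSnonneg
  have htop := tendsto_integral_lossShare_atTop hSint hSnonneg
  refine ⟨hmono, hzero, htop, fun m hm0 hm => ?_⟩
  obtain ⟨a, ha, hfa⟩ := isPreconnected_Ioi.intermediate_value_Ioo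
    (le_principal_iff.2 (self_mem_nhdsWithin (a := 0)))
    (le_principal_iff.2 (Ioi_mem_atTop 0))
    ((continuousOn_integral_lossShare hSint hSnonneg).mono Ioi_subset_Ici_self)
    hzero htop ⟨hm0, hm⟩
  exact ⟨a, ⟨ha, hfa⟩, fun b hb => hmono.injOn hb.1 ha (hb.2.trans hfa.symm)⟩
end

section
/- (Key comparison lemma in the proof of Proposition 5.2.) Let S and S̃ be nonnegative integrable random variables such that E[g(S)] ≤ E[g(S̃)] for every convex function g : ℝ → ℝ for which both expectations exist (i.e. S is dominated by S̃ in the convex order), and suppose P(S̃ > 0) > 0. If a > 0 and ã > 0 satisfy E[ √(aS + (a/2)²) − a/2 ] = E[ √(ãS̃ + (ã/2)²) − ã/2 ], then ã ≥ a. -/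
open Set Filter Topology MeasureTheory

/-- The actuarially fair contribution of the second participant, with parameter `a`. -/
noncomputable def contribution (a s : ℝ) : ℝ := Real.sqrt (a * s + (a / 2) ^ 2) - a / 2

lemma contribution_sq {a s : ℝ} (ha : 0 < a) (hs : 0 ≤ s) :
    contribution a s ^ 2 = a * (s - contribution a s) := by
  have h : 0 ≤ a * s + (a / 2) ^ 2 := by positivity
  have := Real.sq_sqrt h
  unfold contribution
  linear_combination this

lemma contribution_nonneg {a s : ℝ} (ha : 0 < a) (hs : 0 ≤ s) : 0 ≤ contribution a s :=
  sub_nonneg.2 (Real.le_sqrt_of_sq_le (le_add_of_nonneg_left (by positivity)))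

lemma contribution_le {a s : ℝ} (ha : 0 < a) (hs : 0 ≤ s) : contribution a s ≤ s := by
  have h := contribution_sq ha hs
  by_contra! hlt
  nlinarith [sq_nonneg (contribution a s), mul_pos ha (sub_pos.2 hlt)]

lemma contribution_lt_contribution {a b s : ℝ} (ha : 0 < a) (hab : a < b) (hs : 0 < s) :
    contribution a s < contribution b s := by
  have hx := contribution_sq ha hs.le
  have hy := contribution_sq (ha.trans hab) hs.le
  have hx0 := contribution_nonneg ha hs.le
  have hy0 := contribution_nonneg (ha.trans hab) hs.le
  set x := contribution a s
  set y := contribution b s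
  have hxpos : 0 < x := by
    refine lt_of_le_of_ne hx0 fun h => ?_
    rw [← h] at hx
    nlinarith [mul_pos ha hs]
  have hxs : 0 < s - x := by
    refine pos_of_mul_pos_right (?_ : 0 < a * (s - x)) ha.le
    rw [← hx]
    positivity
  by_contra! hyx
  nlinarith [mul_pos (sub_pos.2 hab) hxs, mul_nonneg (ha.trans hab).le (sub_nonneg.2 hyx),
    mul_nonneg (sub_nonneg.2 hyx) (add_nonneg hx0 hy0)]

lemma contribution_zero {a : ℝ} (ha : 0 < a) : contribution a 0 = 0 := by
  simp [contribution, Real.sqrt_sq (half_pos ha).le]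

lemma contribution_le_contribution {a b s : ℝ} (ha : 0 < a) (hab : a < b) (hs : 0 ≤ s) :
    contribution a s ≤ contribution b s := by
  rcases hs.eq_or_lt with rfl | hs
  · rw [contribution_zero ha, contribution_zero (ha.trans hab)]
  · exact (contribution_lt_contribution ha hab hs).le

lemma measurable_contribution (a : ℝ) : Measurable (contribution a) := by
  unfold contribution
  fun_prop

lemma concaveOn_contribution {a : ℝ} (ha : 0 < a) : ConcaveOn ℝ (Ici 0) (contribution a) := by
  refine ⟨convex_Ici 0, fun x hx y hy p q hp hq hpq => ?_⟩
  rw [mem_Ici] at hx hy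
  have h := Real.strictConcaveOn_sqrt.concaveOn.2
    (show a * x + (a / 2) ^ 2 ∈ Ici 0 by rw [mem_Ici]; positivity)
    (show a * y + (a / 2) ^ 2 ∈ Ici 0 by rw [mem_Ici]; positivity) hp hq hpq
  simp only [smul_eq_mul] at h ⊢
  have e : p * (a * x + (a / 2) ^ 2) + q * (a * y + (a / 2) ^ 2) =
      a * (p * x + q * y) + (a / 2) ^ 2 := by
    linear_combination (a / 2) ^ 2 * hpq
  rw [e] at h
  unfold contribution
  linear_combination h - (a / 2) * hpq

/-- The contribution is `1`-Lipschitz: the share retained by the first participant is monotone. -/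
lemma monotoneOn_sub_contribution {a : ℝ} (ha : 0 < a) :
    MonotoneOn (fun s => s - contribution a s) (Ici 0) := by
  intro s hs t ht hst
  rw [mem_Ici] at hs ht
  have hn := contribution_nonneg ha hs
  have hsq := contribution_sq ha hs
  have h : Real.sqrt (a * t + (a / 2) ^ 2) ≤ contribution a s + a / 2 + (t - s) := by
    rw [Real.sqrt_le_iff]
    constructor
    · linarith
    · nlinarith [mul_nonneg hn (sub_nonneg.2 hst), sq_nonneg (t - s)]
  have : contribution a t ≤ contribution a s + (t - s) := by
    rw [contribution]
    linarith
  dsimp only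
  linarith

/-- A convex function on the whole line which equals `-contribution a` on `[0, ∞)`. -/
lemma convexOn_neg_contribution_extension {a : ℝ} (ha : 0 < a) :
    ConvexOn ℝ univ fun s => max s 0 - contribution a (max s 0) - s := by
  refine ⟨convex_univ, fun x _ y _ p q hp hq hpq => ?_⟩
  simp only [smul_eq_mul]
  have hx : (0 : ℝ) ≤ max x 0 := le_max_right _ _
  have hy : (0 : ℝ) ≤ max y 0 := le_max_right _ _
  have hxy : 0 ≤ p * max x 0 + q * max y 0 := by positivity
  have hmax : max (p * x + q * y) 0 ≤ p * max x 0 + q * max y 0 :=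
    max_le (add_le_add (mul_le_mul_of_nonneg_left (le_max_left _ _) hp)
      (mul_le_mul_of_nonneg_left (le_max_left _ _) hq)) hxy
  have h₁ := monotoneOn_sub_contribution ha (le_max_right (p * x + q * y) 0) hxy hmax
  have h₂ := (concaveOn_contribution ha).2 hx hy hp hq hpq
  simp only [smul_eq_mul] at h₁ h₂
  linear_combination h₁ + h₂

lemma integrable_contribution {Ω : Type*} [MeasurableSpace Ω] {P : Measure Ω} {X : Ω → ℝ}
    {a : ℝ} (ha : 0 < a) (hX : ∀ᵐ ω ∂P, 0 ≤ X ω) (hint : Integrable X P) :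
    Integrable (fun ω => contribution a (X ω)) P := by
  refine hint.mono
    ((measurable_contribution a).comp_aemeasurable hint.aemeasurable).aestronglyMeasurable ?_
  filter_upwards [hX] with ω hω
  rw [Real.norm_of_nonneg (contribution_nonneg ha hω), Real.norm_of_nonneg hω]
  exact contribution_le ha hω

/-- key comparison lemma in the proof of Proposition 5.2: if
`S ≼_cx S̃`, `P(S̃ > 0) > 0`, and `a, ã > 0` satisfy
`E[√(aS + (a/2)²) − a/2] = E[√(ãS̃ + (ã/2)²) − ã/2]`, then `ã ≥ a`. -/
theorem stmt_18
    (Ω : Type*) [MeasurableSpace Ω] (P : Measure Ω) [IsProbabilityMeasure P]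
    (S St : Ω → ℝ) (hSmeas : Measurable S) (hStmeas : Measurable St)
    (hSnonneg : ∀ᵐ ω ∂P, 0 ≤ S ω) (hStnonneg : ∀ᵐ ω ∂P, 0 ≤ St ω)
    (hSint : Integrable S P) (hStint : Integrable St P)
    (hcx : ∀ g : ℝ → ℝ, ConvexOn ℝ Set.univ g →
      Integrable (fun ω => g (S ω)) P → Integrable (fun ω => g (St ω)) P →
      ∫ ω, g (S ω) ∂P ≤ ∫ ω, g (St ω) ∂P)
    (hStpos : 0 < P {ω | 0 < St ω})
    (a at_ : ℝ) (ha : 0 < a) (hat : 0 < at_)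
    (heq : ∫ ω, (Real.sqrt (a * S ω + (a / 2) ^ 2) - a / 2) ∂P =
      ∫ ω, (Real.sqrt (at_ * St ω + (at_ / 2) ^ 2) - at_ / 2) ∂P) :
    a ≤ at_ := by
  by_contra! hlt
  change ∫ ω, contribution a (S ω) ∂P = ∫ ω, contribution at_ (St ω) ∂P at heq
  have hS := integrable_contribution ha hSnonneg hSint
  have hSt := integrable_contribution ha hStnonneg hStint
  have hSt' := integrable_contribution hat hStnonneg hStint
  have ext_ae {X : Ω → ℝ} (hX : ∀ᵐ ω ∂P, 0 ≤ X ω) :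
      (fun ω => max (X ω) 0 - contribution a (max (X ω) 0) - X ω) =ᵐ[P]
        fun ω => -contribution a (X ω) := by
    filter_upwards [hX] with ω hω
    rw [max_eq_left hω]
    ring
  have hconv := hcx _ (convexOn_neg_contribution_extension ha)
    (hS.neg.congr (ext_ae hSnonneg).symm) (hSt.neg.congr (ext_ae hStnonneg).symm)
  rw [integral_congr_ae (ext_ae hSnonneg), integral_congr_ae (ext_ae hStnonneg),
    integral_neg, integral_neg] at hconv
  have hdiff : 0 < ∫ ω, (contribution a (St ω) - contribution at_ (St ω)) ∂P := by
    refine (integral_pos_iff_support_of_nonneg_ae ?_ (hSt.sub hSt')).2 ?_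
    · filter_upwards [hStnonneg] with ω hω
      exact sub_nonneg.2 (contribution_le_contribution hat hlt hω)
    · refine hStpos.trans_le (measure_mono fun ω hω => ?_)
      exact (sub_pos.2 (contribution_lt_contribution hat hlt hω)).ne'
  rw [integral_sub hSt hSt'] at hdiff
  linarith
end

section
/- (Proposition 5.2: convex order comparison of AFPO risk-sharing rules for Gamma losses.) Let μ ≥ μ̃ > 0 and λ, λ̃ > 0 with μ/λ = μ̃/λ̃, let S have the Gamma distribution with shape μ and rate λ, and let S̃ have the Gamma distribution with shape μ̃ and rate λ̃ (so that E[S] = E[S̃] = μ/λ and S ≼_cx S̃). Fix m with 0 < m < μ/λ, and let a > 0 and ã > 0 be the unique solutions of E[ √(aS + (a/2)²) − a/2 ] = m and E[ √(ãS̃ + (ã/2)²) − ã/2 ] = m. Define h₂(s) = √(as + (a/2)²) − a/2 and h₁(s) = s − h₂(s), and likewise h̃₂(s) = √(ãs + (ã/2)²) − ã/2 and h̃₁(s) = s − h̃₂(s). Then for i = 1, 2 and every convex function g : ℝ → ℝ for which the expectations exist, E[g(h_i(S))] ≤ E[g(h̃_i(S̃))]; that is, h_i(S) ≼_cx h̃_i(S̃).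 -/
open Set Filter Topology MeasureTheory ProbabilityTheory

/-- The generalized inverse of the distribution function of `ρ`. -/
noncomputable def lowerQuantile (ρ : Measure ℝ) (u : ℝ) : ℝ := sInf {x | u ≤ cdf ρ x}

lemma lowerQuantile_le_iff (ρ : Measure ℝ) {u : ℝ} (hu : u ∈ Ioo (0 : ℝ) 1) (x : ℝ) :
    lowerQuantile ρ u ≤ x ↔ u ≤ cdf ρ x := by
  obtain ⟨b, hb⟩ := ((tendsto_cdf_atBot ρ).eventually (gt_mem_nhds hu.1)).exists
  obtain ⟨c, hc⟩ := ((tendsto_cdf_atTop ρ).eventually (lt_mem_nhds hu.2)).exists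
  have hbdd : BddBelow {x | u ≤ cdf ρ x} :=
    ⟨b, fun y hy => le_of_not_gt fun h => (hy.trans (monotone_cdf ρ h.le)).not_gt hb⟩
  refine ⟨fun h => ?_, fun h => csInf_le hbdd h⟩
  rw [← (cdf ρ).iInf_Ioi_eq x]
  refine le_ciInf fun y => ?_
  obtain ⟨z, hz, hzy⟩ := exists_lt_of_csInf_lt (s := {x | u ≤ cdf ρ x}) ⟨c, hc.le⟩
    (h.trans_lt y.2)
  exact hz.trans (monotone_cdf ρ hzy.le)

lemma aemeasurable_lowerQuantile (ρ : Measure ℝ) :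
    AEMeasurable (lowerQuantile ρ) (volume.restrict (Ioo (0 : ℝ) 1)) := by
  refine aemeasurable_restrict_of_monotoneOn measurableSet_Ioo fun u hu v hv huv => ?_
  rw [lowerQuantile_le_iff ρ hu]
  exact huv.trans ((lowerQuantile_le_iff ρ hv _).1 le_rfl)

/-- The quantile function pushes the uniform distribution forward to the given distribution. -/
lemma map_lowerQuantile (ρ : Measure ℝ) [IsProbabilityMeasure ρ] :
    Measure.map (lowerQuantile ρ) (volume.restrict (Ioo (0 : ℝ) 1)) = ρ := by
  have : IsFiniteMeasure (Measure.map (lowerQuantile ρ) (volume.restrict (Ioo (0 : ℝ) 1))) :=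
    Measure.isFiniteMeasure_map _ _
  refine Measure.ext_of_Iic _ _ fun x => ?_
  rw [Measure.map_apply_of_aemeasurable (aemeasurable_lowerQuantile ρ) measurableSet_Iic,
    Measure.restrict_apply' measurableSet_Ioo, ← ofReal_cdf]
  have hset : lowerQuantile ρ ⁻¹' Iic x ∩ Ioo 0 1 = Iic (cdf ρ x) ∩ Ioo 0 1 := by
    ext u
    simp only [mem_inter_iff, mem_preimage, mem_Iic, and_congr_left_iff]
    exact fun hu => lowerQuantile_le_iff ρ hu x
  rw [hset]
  refine le_antisymm ?_ ?_
  · calc volume (Iic (cdf ρ x) ∩ Ioo 0 1) ≤ volume (Icc 0 (cdf ρ x)) :=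
        measure_mono fun u hu => ⟨hu.2.1.le, hu.1⟩
      _ = _ := by simp
  · calc ENNReal.ofReal (cdf ρ x) = volume (Ioo 0 (cdf ρ x)) := by simp
      _ ≤ volume (Iic (cdf ρ x) ∩ Ioo 0 1) :=
        measure_mono fun u hu => ⟨hu.2.le, hu.1, hu.2.trans_le (cdf_le_one ρ x)⟩

/-- A convex function on the line has a supporting line at every point. -/
lemma ConvexOn.exists_subgradient {g : ℝ → ℝ} (hg : ConvexOn ℝ univ g) :
    ∃ D : ℝ → ℝ, ∀ x y, g x + D x * (y - x) ≤ g y := by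
  refine ⟨fun x => derivWithin g (Ioi x) x, fun x y => ?_⟩
  have hx : x ∈ interior (univ : Set ℝ) := by simp
  rcases lt_trichotomy x y with h | rfl | h
  · have := hg.rightDeriv_le_slope_of_mem_interior hx (mem_univ y) h
    rw [slope_def_field, le_div_iff₀ (sub_pos.2 h)] at this
    linarith
  · simp
  · have := (hg.slope_le_leftDeriv_of_mem_interior (mem_univ y) hx h).trans
      (hg.leftDeriv_le_rightDeriv_of_mem_interior hx)
    rw [slope_def_field, div_le_iff₀ (sub_pos.2 h)] at this
    linarith

/-- **Cut criterion** for the convex order: two laws with the same mean are ordered as soon as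
their distribution functions cross at most once. The convexity of `g` enters through a choice of
supporting lines. -/
theorem integral_le_integral_of_cdf_cross {ρ ν : Measure ℝ} [IsProbabilityMeasure ρ]
    [IsProbabilityMeasure ν] (hρ : Integrable id ρ) (hν : Integrable id ν)
    (hmean : ∫ x, x ∂ρ = ∫ x, x ∂ν)
    (hcross : ∀ x y, x < y → cdf ν x < cdf ρ x → cdf ν y ≤ cdf ρ y)
    {g D : ℝ → ℝ} (hD : ∀ x y, g x + D x * (y - x) ≤ g y)
    (hgρ : Integrable g ρ) (hgν : Integrable g ν) :
    ∫ x, g x ∂ρ ≤ ∫ x, g x ∂ν := by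
  set V : Measure ℝ := volume.restrict (Ioo (0 : ℝ) 1)
  have transfer : ∀ (κ : Measure ℝ) [IsProbabilityMeasure κ] (f : ℝ → ℝ), Integrable f κ →
      Integrable (fun u => f (lowerQuantile κ u)) V ∧
        ∫ x, f x ∂κ = ∫ u, f (lowerQuantile κ u) ∂V := by
    intro κ _ f hf
    rw [← map_lowerQuantile κ] at hf
    refine ⟨hf.comp_aemeasurable (aemeasurable_lowerQuantile κ), ?_⟩
    rw [← integral_map (aemeasurable_lowerQuantile κ) hf.aestronglyMeasurable,
      map_lowerQuantile κ]
  obtain ⟨iρ, eρ⟩ := transfer ρ id hρ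
  obtain ⟨iν, eν⟩ := transfer ν id hν
  obtain ⟨iρg, eρg⟩ := transfer ρ g hgρ
  obtain ⟨iνg, eνg⟩ := transfer ν g hgν
  simp only [id] at iρ eρ iν eν
  have hdiff : ∫ u, (lowerQuantile ν u - lowerQuantile ρ u) ∂V = 0 := by
    rw [integral_sub iν iρ, ← eρ, ← eν, hmean, sub_self]
  have hDmono : ∀ x y, x ≤ y → D x ≤ D y := by
    intro x y hxy
    rcases hxy.eq_or_lt with rfl | h
    · rfl
    · have h₁ := hD x y
      have h₂ := hD y x
      by_contra! hlt
      nlinarith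
  rw [eρg, eνg]
  by_cases hne : ∃ x, cdf ν x < cdf ρ x
  · by_cases hbdd : BddBelow {x | cdf ν x < cdf ρ x}
    · set x₀ := sInf {x | cdf ν x < cdf ρ x}
      have hlow : ∀ x, x < x₀ → cdf ρ x ≤ cdf ν x := fun x hx =>
        not_lt.1 fun h => hx.not_ge (csInf_le hbdd h)
      have hhigh : ∀ x, x₀ < x → cdf ν x ≤ cdf ρ x := fun x hx => by
        obtain ⟨z, hz, hzx⟩ := exists_lt_of_csInf_lt hne hx
        exact hcross z x hzx hz
      have key : ∀ u ∈ Ioo (0 : ℝ) 1, D x₀ * (lowerQuantile ν u - lowerQuantile ρ u) ≤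
          g (lowerQuantile ν u) - g (lowerQuantile ρ u) := by
        intro u hu
        have hsub := hD (lowerQuantile ρ u) (lowerQuantile ν u)
        rcases lt_trichotomy (lowerQuantile ρ u) x₀ with h | h | h
        · have hle : lowerQuantile ν u ≤ lowerQuantile ρ u := by
            rw [lowerQuantile_le_iff ν hu]
            exact ((lowerQuantile_le_iff ρ hu _).1 le_rfl).trans (hlow _ h)
          nlinarith [hDmono _ _ h.le]
        · rw [h] at hsub ⊢
          linarith
        · have hle : lowerQuantile ρ u ≤ lowerQuantile ν u := by
            by_contra! hlt
            obtain ⟨y, hy₁, hy₂⟩ := exists_between (max_lt hlt h)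
            have hy := hhigh y ((le_max_right _ _).trans_lt hy₁)
            have := (lowerQuantile_le_iff ν hu y).1 ((le_max_left _ _).trans hy₁.le)
            exact hy₂.not_ge ((lowerQuantile_le_iff ρ hu y).2 (this.trans hy))
          nlinarith [hDmono _ _ h.le]
      have hint := setIntegral_mono_on ((iν.sub iρ).const_mul (D x₀)) (iνg.sub iρg)
        measurableSet_Ioo key
      simp only [Pi.sub_apply] at hint
      rw [integral_const_mul, hdiff, mul_zero, integral_sub iνg iρg] at hint
      linarith
    · -- here `ν` dominates `ρ` stochastically, so equal means force equality
      have hall : ∀ x, cdf ν x ≤ cdf ρ x := fun x => by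
        obtain ⟨z, hz, hzx⟩ := not_bddBelow_iff.1 hbdd x
        exact hcross z x hzx hz
      have hnonneg : ∀ u ∈ Ioo (0 : ℝ) 1, 0 ≤ lowerQuantile ν u - lowerQuantile ρ u := by
        intro u hu
        rw [sub_nonneg, lowerQuantile_le_iff ρ hu]
        exact ((lowerQuantile_le_iff ν hu _).1 le_rfl).trans (hall _)
      have hae := (integral_eq_zero_iff_of_nonneg_ae
        (ae_restrict_of_forall_mem measurableSet_Ioo hnonneg) (iν.sub iρ)).1 hdiff
      refine (integral_congr_ae ?_).le
      filter_upwards [hae] with u hu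
      rw [sub_eq_zero.1 hu]
  · have hall : ∀ x, cdf ρ x ≤ cdf ν x := fun x => not_lt.1 fun h => hne ⟨x, h⟩
    have hnonneg : ∀ u ∈ Ioo (0 : ℝ) 1, 0 ≤ lowerQuantile ρ u - lowerQuantile ν u := by
      intro u hu
      rw [sub_nonneg, lowerQuantile_le_iff ν hu]
      exact ((lowerQuantile_le_iff ρ hu _).1 le_rfl).trans (hall _)
    have hdiff' : ∫ u, (lowerQuantile ρ u - lowerQuantile ν u) ∂V = 0 := by
      rw [integral_sub iρ iν, ← eρ, ← eν, hmean, sub_self]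
    have hae := (integral_eq_zero_iff_of_nonneg_ae
      (ae_restrict_of_forall_mem measurableSet_Ioo hnonneg) (iρ.sub iν)).1 hdiff'
    refine (integral_congr_ae ?_).le
    filter_upwards [hae] with u hu
    rw [sub_eq_zero.1 hu]

section Gamma

variable {α β r s : ℝ}

lemma integrable_gammaPDFReal (hα : 0 < α) (hr : 0 < r) : Integrable (gammaPDFReal α r) := by
  refine ⟨by fun_prop, ?_⟩
  rw [hasFiniteIntegral_iff_ofReal (ae_of_all _ (gammaPDFReal_nonneg hα hr))]
  exact (lintegral_gammaPDF_eq_one hα hr).trans_lt ENNReal.one_lt_top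

lemma integral_gammaPDFReal (hα : 0 < α) (hr : 0 < r) : ∫ x, gammaPDFReal α r x = 1 := by
  rw [integral_eq_lintegral_of_nonneg_ae (ae_of_all _ (gammaPDFReal_nonneg hα hr)) (by fun_prop)]
  exact (congrArg _ (lintegral_gammaPDF_eq_one hα hr)).trans ENNReal.toReal_one

lemma ae_gammaMeasure_pos : ∀ᵐ x ∂gammaMeasure α r, 0 < x := by
  have hmeas : Measurable (gammaPDF α r) := (measurable_gammaPDFReal α r).ennreal_ofReal
  rw [gammaMeasure, ae_withDensity_iff hmeas]
  filter_upwards [Measure.ae_ne volume (0 : ℝ)] with x hx h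
  exact lt_of_le_of_ne (not_lt.1 fun hneg => h (gammaPDF_of_neg hneg)) hx.symm

lemma gammaPDFReal_mul_self (hα : 0 < α) (hr : 0 < r) (x : ℝ) :
    gammaPDFReal α r x * x = α / r * gammaPDFReal (α + 1) r x := by
  unfold gammaPDFReal
  split_ifs with h
  · rcases h.eq_or_lt with rfl | h
    · simp [Real.zero_rpow hα.ne']
    · have hΓ := (Real.Gamma_pos_of_pos hα).ne'
      rw [Real.Gamma_add_one hα.ne', Real.rpow_add_one hr.ne', add_sub_cancel_right,
        Real.rpow_sub_one h.ne']
      field_simp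
  · simp

lemma integrable_id_gammaMeasure (hα : 0 < α) (hr : 0 < r) :
    Integrable id (gammaMeasure α r) := by
  have hmeas : Measurable (gammaPDF α r) := (measurable_gammaPDFReal α r).ennreal_ofReal
  rw [gammaMeasure, integrable_withDensity_iff hmeas (ae_of_all _ fun _ => ENNReal.ofReal_lt_top)]
  refine ((integrable_gammaPDFReal (by linarith : 0 < α + 1) hr).const_mul (α / r)).congr
    (ae_of_all _ fun x => ?_)
  simp only [id, gammaPDF, ENNReal.toReal_ofReal (gammaPDFReal_nonneg hα hr x)]
  rw [mul_comm x, gammaPDFReal_mul_self hα hr]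

lemma integral_id_gammaMeasure (hα : 0 < α) (hr : 0 < r) :
    ∫ x, x ∂gammaMeasure α r = α / r := by
  have hmeas : Measurable (gammaPDF α r) := (measurable_gammaPDFReal α r).ennreal_ofReal
  rw [gammaMeasure, integral_withDensity_eq_integral_toReal_smul hmeas
    (ae_of_all _ fun _ => ENNReal.ofReal_lt_top)]
  simp only [gammaPDF, ENNReal.toReal_ofReal (gammaPDFReal_nonneg hα hr _), smul_eq_mul,
    gammaPDFReal_mul_self hα hr]
  rw [integral_const_mul, integral_gammaPDFReal (by linarith) hr, mul_one]

lemma cdf_gammaMeasure_mul (hα : 0 < α) (hr : 0 < r) {c : ℝ} (hc : 0 < c) (x : ℝ) :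
    cdf (gammaMeasure α r) (c * x) = cdf (gammaMeasure α (r * c)) x := by
  rw [cdf_gammaMeasure_eq_integral hα hr, cdf_gammaMeasure_eq_integral hα (mul_pos hr hc),
    ← integral_indicator measurableSet_Iic, ← integral_indicator measurableSet_Iic]
  have h := Measure.integral_comp_mul_left ((Iic (c * x)).indicator (gammaPDFReal α r)) c
  rw [abs_of_pos (inv_pos.2 hc), smul_eq_mul, eq_inv_mul_iff_mul_eq₀ hc.ne',
    ← integral_const_mul] at h
  rw [← h]
  congr 1
  ext y
  simp only [indicator, mem_Iic, mul_le_mul_iff_right₀ hc, gammaPDFReal,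
    mul_nonneg_iff_of_pos_left hc]
  split_ifs with h₁ h₂
  · rw [Real.mul_rpow hr.le hc.le, Real.mul_rpow hc.le h₂, Real.rpow_sub_one hc.ne' α]
    field_simp
  · simp
  · simp

/-- Once the density of a Gamma law with the smaller shape parameter exceeds that of a Gamma law
with the larger one after having been below it, it stays above. -/
lemma gammaPDFReal_le_of_cross (hβ : 0 < β) (hβα : β ≤ α) (hr : 0 < r) (hs : 0 < s) {x y z : ℝ}
    (hx : 0 < x) (hxy : x < y) (hyz : y ≤ z) (hltx : gammaPDFReal β s x < gammaPDFReal α r x)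
    (hlty : gammaPDFReal α r y < gammaPDFReal β s y) :
    gammaPDFReal α r z ≤ gammaPDFReal β s z := by
  have hα := hβ.trans_le hβα
  set C := Real.log (s ^ β / Real.Gamma β) - Real.log (r ^ α / Real.Gamma α)
  set ψ : ℝ → ℝ := fun w => (α - β) * (-Real.log w) + ((r - s) * w + C)
  have hψ : ∀ w, 0 < w →
      ψ w = Real.log (gammaPDFReal β s w) - Real.log (gammaPDFReal α r w) := by
    intro w hw
    have hΓα := Real.Gamma_pos_of_pos hα
    have hΓβ := Real.Gamma_pos_of_pos hβ
    simp only [gammaPDFReal, if_pos hw.le]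
    rw [Real.log_mul (by positivity) (by positivity), Real.log_mul (by positivity) (by positivity),
      Real.log_mul (by positivity) (by positivity), Real.log_mul (by positivity) (by positivity),
      Real.log_rpow hw, Real.log_rpow hw, Real.log_exp, Real.log_exp]
    simp only [ψ, C]
    ring
  have hconv : ConvexOn ℝ (Ioi 0) ψ := by
    refine (strictConcaveOn_log_Ioi.concaveOn.neg.smul (sub_nonneg.2 hβα)).add ?_
    refine ⟨convex_Ioi 0, fun u _ v _ a b _ _ hab => le_of_eq ?_⟩
    simp only [smul_eq_mul]
    linear_combination -C * hab
  have hy := hx.trans hxy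
  have hz := hy.trans_le hyz
  have hψx : ψ x < 0 := by
    rw [hψ x hx, sub_neg]
    exact Real.log_lt_log (gammaPDFReal_pos hβ hs hx) hltx
  have hψy : 0 < ψ y := by
    rw [hψ y hy, sub_pos]
    exact Real.log_lt_log (gammaPDFReal_pos hα hr hy) hlty
  have hmax := hconv.le_max_of_mem_Icc (mem_Ioi.2 hx) (mem_Ioi.2 hz) ⟨hxy.le, hyz⟩
  have hψz : 0 < ψ z := by
    rcases le_max_iff.1 hmax with h | h <;> linarith
  rw [hψ z hz, sub_pos] at hψz
  exact ((Real.log_lt_log_iff (gammaPDFReal_pos hα hr hz) (gammaPDFReal_pos hβ hs hz)).1 hψz).le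

/-- The distribution functions of two Gamma laws cross at most once. -/
lemma cdf_gammaMeasure_cross (hβ : 0 < β) (hβα : β ≤ α) (hr : 0 < r) (hs : 0 < s) {x y : ℝ}
    (hxy : x < y) (hlt : cdf (gammaMeasure β s) x < cdf (gammaMeasure α r) x) :
    cdf (gammaMeasure β s) y ≤ cdf (gammaMeasure α r) y := by
  have hα := hβ.trans_le hβα
  have iα := integrable_gammaPDFReal hα hr
  have iβ := integrable_gammaPDFReal hβ hs
  by_contra! hgt
  simp only [cdf_gammaMeasure_eq_integral hα hr, cdf_gammaMeasure_eq_integral hβ hs] at hlt hgt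
  obtain ⟨x₁, hx₁, hx₁x, hlt₁⟩ : ∃ x₁, 0 < x₁ ∧ x₁ ≤ x ∧
      gammaPDFReal β s x₁ < gammaPDFReal α r x₁ := by
    by_contra! h
    refine hlt.not_ge (setIntegral_mono_on_ae iα.integrableOn iβ.integrableOn measurableSet_Iic ?_)
    filter_upwards [Measure.ae_ne volume (0 : ℝ)] with w hw hwx
    rcases hw.lt_or_gt with hneg | hpos
    · simp [gammaPDFReal, hneg.not_ge]
    · exact h w hpos hwx
  obtain ⟨x₂, hx₂, hlt₂⟩ : ∃ x₂ ∈ Ioc x y, gammaPDFReal α r x₂ < gammaPDFReal β s x₂ := by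
    by_contra! h
    have hmid := setIntegral_mono_on iβ.integrableOn iα.integrableOn measurableSet_Ioc h
    rw [← Iic_union_Ioc_eq_Iic hxy.le,
      setIntegral_union (Iic_disjoint_Ioc le_rfl) measurableSet_Ioc iα.integrableOn iα.integrableOn,
      setIntegral_union (Iic_disjoint_Ioc le_rfl) measurableSet_Ioc iβ.integrableOn
        iβ.integrableOn] at hgt
    linarith
  have htail := setIntegral_mono_on iα.integrableOn iβ.integrableOn (measurableSet_Ioi (a := y))
    fun z hz => gammaPDFReal_le_of_cross hβ hβα hr hs hx₁ (hx₁x.trans_lt hx₂.1)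
      (hx₂.2.trans (mem_Ioi.1 hz).le) hlt₁ hlt₂
  have hα1 := integral_add_compl (measurableSet_Iic (a := y)) iα
  have hβ1 := integral_add_compl (measurableSet_Iic (a := y)) iβ
  rw [compl_Iic, integral_gammaPDFReal hα hr] at hα1
  rw [compl_Iic, integral_gammaPDFReal hβ hs] at hβ1
  linarith

/-- Star-shaped comparison of Gamma laws: their distribution functions still cross at most once
after rescaling. -/
lemma cdf_gammaMeasure_cross_mul (hβ : 0 < β) (hβα : β ≤ α) (hr : 0 < r) (hs : 0 < s) {c x y : ℝ}
    (hc : 0 < c) (hxy : x < y)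
    (hlt : cdf (gammaMeasure β s) (c * x) < cdf (gammaMeasure α r) x) :
    cdf (gammaMeasure β s) (c * y) ≤ cdf (gammaMeasure α r) y := by
  rw [cdf_gammaMeasure_mul hβ hs hc] at hlt ⊢
  exact cdf_gammaMeasure_cross hβ hβα hr (mul_pos hs hc) hxy hlt

end Gamma

/-- Two increasing transforms of Gamma laws with the same mean are convexly ordered when the ratio
of the inverse transforms `qt / q` is decreasing. -/
theorem integral_comp_gammaMeasure_le {α β r s : ℝ} (hβ : 0 < β) (hβα : β ≤ α) (hr : 0 < r)
    (hs : 0 < s) {φ φt q qt : ℝ → ℝ} (hφ : Measurable φ) (hφt : Measurable φt)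
    (hφ_mem : ∀ t, 0 < t → φ t ∈ Ioc 0 t) (hφt_mem : ∀ t, 0 < t → φt t ∈ Ioc 0 t)
    (hq : ∀ t x, 0 < t → 0 < x → (φ t ≤ x ↔ t ≤ q x))
    (hqt : ∀ t x, 0 < t → 0 < x → (φt t ≤ x ↔ t ≤ qt x))
    (hq_pos : ∀ x, 0 < x → 0 < q x) (hqt_pos : ∀ x, 0 < x → 0 < qt x)
    (hq_mono : ∀ x y, 0 < x → x < y → q x < q y)
    (hratio : ∀ x y, 0 < x → x < y → qt y * q x ≤ qt x * q y)
    (hmean : ∫ t, φ t ∂gammaMeasure α r = ∫ t, φt t ∂gammaMeasure β s)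
    {g : ℝ → ℝ} (hg : ConvexOn ℝ univ g)
    (hgφ : Integrable (fun t => g (φ t)) (gammaMeasure α r))
    (hgφt : Integrable (fun t => g (φt t)) (gammaMeasure β s)) :
    ∫ t, g (φ t) ∂gammaMeasure α r ≤ ∫ t, g (φt t) ∂gammaMeasure β s := by
  have hα := hβ.trans_le hβα
  have := isProbabilityMeasure_gammaMeasure hα hr
  have := isProbabilityMeasure_gammaMeasure hβ hs
  have hgc : Continuous g := continuousOn_univ.1 (hg.continuousOn isOpen_univ)
  obtain ⟨D, hD⟩ := hg.exists_subgradient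
  have cdf_pos : ∀ {a l : ℝ} {f p : ℝ → ℝ} [IsProbabilityMeasure (gammaMeasure a l)],
      Measurable f → (∀ t x, 0 < t → 0 < x → (f t ≤ x ↔ t ≤ p x)) → ∀ x, 0 < x →
      cdf ((gammaMeasure a l).map f) x = cdf (gammaMeasure a l) (p x) := by
    intro a l f p _ hf hp x hx
    have := Measure.isProbabilityMeasure_map (μ := gammaMeasure a l) hf.aemeasurable
    rw [cdf_eq_real, cdf_eq_real, map_measureReal_apply hf measurableSet_Iic]
    refine measureReal_congr ?_
    filter_upwards [ae_gammaMeasure_pos] with t ht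
    exact propext (hp t x ht hx)
  have iφ : Integrable φ (gammaMeasure α r) := by
    refine (integrable_id_gammaMeasure hα hr).mono' hφ.aestronglyMeasurable ?_
    filter_upwards [ae_gammaMeasure_pos] with t ht
    rw [Real.norm_of_nonneg (hφ_mem t ht).1.le]
    exact (hφ_mem t ht).2
  have iφt : Integrable φt (gammaMeasure β s) := by
    refine (integrable_id_gammaMeasure hβ hs).mono' hφt.aestronglyMeasurable ?_
    filter_upwards [ae_gammaMeasure_pos] with t ht
    rw [Real.norm_of_nonneg (hφt_mem t ht).1.le]
    exact (hφt_mem t ht).2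
  have := Measure.isProbabilityMeasure_map (μ := gammaMeasure α r) hφ.aemeasurable
  have := Measure.isProbabilityMeasure_map (μ := gammaMeasure β s) hφt.aemeasurable
  rw [← integral_map hφ.aemeasurable hgc.aestronglyMeasurable,
    ← integral_map hφt.aemeasurable hgc.aestronglyMeasurable]
  refine integral_le_integral_of_cdf_cross
    ((integrable_map_measure aestronglyMeasurable_id hφ.aemeasurable).2 iφ)
    ((integrable_map_measure aestronglyMeasurable_id hφt.aemeasurable).2 iφt) ?_ ?_ hD
    ((integrable_map_measure hgc.aestronglyMeasurable hφ.aemeasurable).2 hgφ)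
    ((integrable_map_measure hgc.aestronglyMeasurable hφt.aemeasurable).2 hgφt)
  · rw [integral_map hφ.aemeasurable (f := fun x => x) aestronglyMeasurable_id,
      integral_map hφt.aemeasurable (f := fun x => x) aestronglyMeasurable_id, hmean]
  · intro x y hxy hlt
    have hx : 0 < x := by
      by_contra! hx
      have hzero : cdf ((gammaMeasure α r).map φ) x = 0 := by
        rw [cdf_eq_real, map_measureReal_apply hφ measurableSet_Iic, measureReal_eq_zero_iff,
          measure_eq_zero_iff_ae_notMem]
        filter_upwards [ae_gammaMeasure_pos] with t ht h
        exact ((hφ_mem t ht).1.trans_le h).not_ge hx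
      exact (cdf_nonneg ((gammaMeasure β s).map φt) x).not_gt (hzero ▸ hlt)
    have hy := hx.trans hxy
    rw [cdf_pos hφ hq x hx, cdf_pos hφt hqt x hx] at hlt
    rw [cdf_pos hφ hq y hy, cdf_pos hφt hqt y hy]
    have hqx := hq_pos x hx
    rw [← div_mul_cancel₀ (qt x) hqx.ne'] at hlt
    refine le_trans (monotone_cdf _ ?_) (cdf_gammaMeasure_cross_mul hβ hβα hr hs
      (div_pos (hqt_pos x hx) hqx) (hq_mono x y hx hxy) hlt)
    rw [div_mul_eq_mul_div, le_div_iff₀ hqx]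
    exact hratio x y hx hxy

/-- The share `h₂` of the second participant. -/
noncomputable def shareFn (a t : ℝ) : ℝ := Real.sqrt (a * t + (a / 2) ^ 2) - a / 2

section Share

variable {a b t u : ℝ}

@[fun_prop]
lemma measurable_shareFn : Measurable (shareFn a) := by
  unfold shareFn
  fun_prop

lemma shareFn_nonneg (ha : 0 < a) (ht : 0 ≤ t) : 0 ≤ shareFn a t := by
  unfold shareFn
  rw [sub_nonneg]
  exact Real.le_sqrt_of_sq_le (by nlinarith [mul_nonneg ha.le ht])

lemma shareFn_sq (ha : 0 < a) (ht : 0 ≤ t) : shareFn a t ^ 2 = a * (t - shareFn a t) := by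
  unfold shareFn
  have := Real.sq_sqrt (by positivity : 0 ≤ a * t + (a / 2) ^ 2)
  linear_combination this

lemma shareFn_pos (ha : 0 < a) (ht : 0 < t) : 0 < shareFn a t := by
  refine (shareFn_nonneg ha ht.le).lt_of_ne fun h => ?_
  have := shareFn_sq ha ht.le
  rw [← h] at this
  nlinarith [mul_pos ha ht]

lemma shareFn_lt (ha : 0 < a) (ht : 0 < t) : shareFn a t < t := by
  have h₁ := shareFn_sq ha ht.le
  have h₂ := shareFn_pos ha ht
  by_contra! h
  nlinarith [mul_nonneg ha.le (sub_nonneg.2 h), pow_pos h₂ 2]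

lemma shareFn_lt_shareFn (ha : 0 < a) (hab : a < b) (ht : 0 < t) :
    shareFn a t < shareFn b t := by
  have hb := ha.trans hab
  have h₁ := shareFn_sq ha ht.le
  have h₂ := shareFn_sq hb ht.le
  have h₃ := shareFn_pos hb ht
  have h₄ := shareFn_lt hb ht
  by_contra! h
  have h₅ : shareFn b t ^ 2 ≤ shareFn a t ^ 2 := by gcongr
  nlinarith [mul_pos (sub_pos.2 hab) (sub_pos.2 h₄), mul_nonneg ha.le (sub_nonneg.2 h)]

lemma shareFn_le_iff (ha : 0 < a) (ht : 0 < t) (hu : 0 < u) :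
    shareFn a t ≤ u ↔ t ≤ u + u ^ 2 / a := by
  have h₁ := shareFn_sq ha ht.le
  have h₂ := shareFn_pos ha ht
  have h₃ : a * (u ^ 2 / a) = u ^ 2 := by field_simp
  constructor
  · intro h
    have : shareFn a t ^ 2 ≤ u ^ 2 := by gcongr
    nlinarith
  · intro h
    by_contra! hlt
    have : u ^ 2 < shareFn a t ^ 2 := by gcongr
    nlinarith [mul_pos ha (sub_pos.2 hlt), mul_nonneg ha.le (sub_nonneg.2 h)]

lemma sub_shareFn_le_iff (ha : 0 < a) (ht : 0 < t) :
    t - shareFn a t ≤ u ↔ t ≤ u + Real.sqrt (a * u) := by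
  have h₁ := shareFn_sq ha ht.le
  have h₂ := shareFn_pos ha ht
  constructor
  · intro h
    have : shareFn a t ≤ Real.sqrt (a * u) := by
      apply Real.le_sqrt_of_sq_le
      rw [h₁]
      gcongr
    linarith
  · intro h
    by_contra! hlt
    have : Real.sqrt (a * u) < shareFn a t := by
      rw [Real.sqrt_lt' h₂, h₁]
      gcongr
    linarith

/-- The extension of `-h₂` by a line to the left of the origin lies above its tangents. -/
lemma neg_shareFn_extension_subgradient (ha : 0 < a) (x y : ℝ) :
    -(shareFn a (max x 0) + min x 0) + -(1 / (1 + 2 * shareFn a (max x 0) / a)) * (y - x) ≤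
      -(shareFn a (max y 0) + min y 0) := by
  set p := shareFn a (max x 0)
  set q := shareFn a (max y 0)
  have hp : 0 ≤ p := shareFn_nonneg ha (le_max_right x 0)
  have hp₂ : p ^ 2 = a * (max x 0 - p) := shareFn_sq ha (le_max_right x 0)
  have hq₂ : q ^ 2 = a * (max y 0 - q) := shareFn_sq ha (le_max_right y 0)
  have hx : max x 0 + min x 0 = x := by rw [max_add_min, add_zero]
  have hy : max y 0 + min y 0 = y := by rw [max_add_min, add_zero]
  have hmin : min y 0 ≤ 0 := min_le_right y 0
  have hprod : p * min x 0 = 0 := by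
    rcases le_total 0 x with h | h
    · rw [min_eq_right h, mul_zero]
    · rw [max_eq_right h] at hp₂
      have : p = 0 := by nlinarith
      rw [this, zero_mul]
  have hpos : 0 < a + 2 * p := by positivity
  have hD : 1 / (1 + 2 * p / a) = a / (a + 2 * p) := by field_simp
  rw [hD]
  have key : (q + min y 0 - p - min x 0) * (a + 2 * p) ≤ a * (y - x) := by
    nlinarith [sq_nonneg (q - p), mul_nonneg hp (neg_nonneg.2 hmin)]
  rw [← le_div_iff₀ hpos, mul_div_right_comm] at key
  linarith

lemma integrable_shareFn {κ l : ℝ} (ha : 0 < a) (hκ : 0 < κ) (hl : 0 < l) :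
    Integrable (shareFn a) (gammaMeasure κ l) := by
  refine (integrable_id_gammaMeasure hκ hl).mono' (by fun_prop) ?_
  filter_upwards [ae_gammaMeasure_pos] with t ht
  rw [Real.norm_of_nonneg (shareFn_pos ha ht).le]
  exact (shareFn_lt ha ht).le

end Share

/-- A larger dispersion of the aggregate loss has to be compensated by a larger parameter in the
fairness condition. -/
lemma le_of_integral_shareFn_eq {α β r s a b : ℝ} (hβ : 0 < β) (hβα : β ≤ α) (hr : 0 < r)
    (hs : 0 < s) (hmean : α / r = β / s) (ha : 0 < a) (hb : 0 < b)
    (hfair : ∫ t, shareFn a t ∂gammaMeasure α r = ∫ t, shareFn b t ∂gammaMeasure β s) :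
    a ≤ b := by
  have hα := hβ.trans_le hβα
  have := isProbabilityMeasure_gammaMeasure hα hr
  have := isProbabilityMeasure_gammaMeasure hβ hs
  have hext : ∀ κ l : ℝ, (fun t => -shareFn a t) =ᵐ[gammaMeasure κ l]
      fun t => -(shareFn a (max t 0) + min t 0) := by
    intro κ l
    filter_upwards [ae_gammaMeasure_pos] with t ht
    rw [max_eq_left ht.le, min_eq_right ht.le, add_zero]
  by_contra! hba
  have hcx := integral_le_integral_of_cdf_cross (integrable_id_gammaMeasure hα hr)
    (integrable_id_gammaMeasure hβ hs)
    (by rw [integral_id_gammaMeasure hα hr, integral_id_gammaMeasure hβ hs, hmean])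
    (fun x y hxy => cdf_gammaMeasure_cross hβ hβα hr hs hxy)
    (neg_shareFn_extension_subgradient ha)
    ((integrable_shareFn ha hα hr).neg.congr (hext α r)) ((integrable_shareFn ha hβ hs).neg.congr (hext β s))
  rw [← integral_congr_ae (hext α r), ← integral_congr_ae (hext β s), integral_neg, integral_neg,
    neg_le_neg_iff, hfair] at hcx
  have hlt : ∀ᵐ t ∂gammaMeasure β s, shareFn b t < shareFn a t := by
    filter_upwards [ae_gammaMeasure_pos] with t ht
    exact shareFn_lt_shareFn hb hba ht
  have hzero : ∫ t, (shareFn a t - shareFn b t) ∂gammaMeasure β s = 0 := by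
    refine le_antisymm ?_ (integral_nonneg_of_ae (hlt.mono fun t ht => (sub_pos.2 ht).le))
    rw [integral_sub (integrable_shareFn ha hβ hs) (integrable_shareFn hb hβ hs)]
    linarith
  have hae := (integral_eq_zero_iff_of_nonneg_ae (hlt.mono fun t ht => (sub_pos.2 ht).le)
    ((integrable_shareFn ha hβ hs).sub (integrable_shareFn hb hβ hs))).1 hzero
  obtain ⟨t, ht, ht'⟩ := (hlt.and hae).exists
  exact (sub_pos.2 ht).ne' ht'

/-- Proposition 5.2: for Gamma-distributed aggregate losses
`S ~ Γ(μ, λ)` and `S̃ ~ Γ(μ̃, λ̃)` with `μ ≥ μ̃` and equal means `μ/λ = μ̃/λ̃`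
(so that `S ≼_cx S̃`), the corresponding AFPO risk-sharing rules
`h₂(s) = √(as + (a/2)²) − a/2`, `h₁(s) = s − h₂(s)` (and likewise for `S̃`)
satisfy `h_i(S) ≼_cx h̃_i(S̃)` for `i = 1, 2`. -/
theorem stmt_19
    (Ω : Type*) [MeasurableSpace Ω] (P : Measure Ω) [IsProbabilityMeasure P]
    (μ μt l lt : ℝ) (hμt : 0 < μt) (hμμt : μt ≤ μ) (hl : 0 < l) (hlt : 0 < lt)
    (hmean : μ / l = μt / lt)
    (S St : Ω → ℝ) (hSmeas : Measurable S) (hStmeas : Measurable St)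
    (hSlaw : Measure.map S P = gammaMeasure μ l)
    (hStlaw : Measure.map St P = gammaMeasure μt lt)
    (m : ℝ) (hm : 0 < m) (hm' : m < μ / l)
    (a at_ : ℝ) (ha : 0 < a) (hat : 0 < at_)
    (hfaira : ∫ ω, (Real.sqrt (a * S ω + (a / 2) ^ 2) - a / 2) ∂P = m)
    (hfairat : ∫ ω, (Real.sqrt (at_ * St ω + (at_ / 2) ^ 2) - at_ / 2) ∂P = m) :
    (∀ g : ℝ → ℝ, ConvexOn ℝ Set.univ g →
      Integrable (fun ω => g (Real.sqrt (a * S ω + (a / 2) ^ 2) - a / 2)) P →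
      Integrable (fun ω => g (Real.sqrt (at_ * St ω + (at_ / 2) ^ 2) - at_ / 2)) P →
      ∫ ω, g (Real.sqrt (a * S ω + (a / 2) ^ 2) - a / 2) ∂P ≤
        ∫ ω, g (Real.sqrt (at_ * St ω + (at_ / 2) ^ 2) - at_ / 2) ∂P) ∧
    (∀ g : ℝ → ℝ, ConvexOn ℝ Set.univ g →
      Integrable (fun ω => g (S ω - (Real.sqrt (a * S ω + (a / 2) ^ 2) - a / 2))) P →
      Integrable (fun ω => g (St ω - (Real.sqrt (at_ * St ω + (at_ / 2) ^ 2) - at_ / 2))) P →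
      ∫ ω, g (S ω - (Real.sqrt (a * S ω + (a / 2) ^ 2) - a / 2)) ∂P ≤
        ∫ ω, g (St ω - (Real.sqrt (at_ * St ω + (at_ / 2) ^ 2) - at_ / 2)) ∂P) := by
  have hμ := hμt.trans_le hμμt
  have tr : ∀ {T : Ω → ℝ} {κ r : ℝ} {f : ℝ → ℝ}, Measurable T →
      Measure.map T P = gammaMeasure κ r → Measurable f →
      ∫ ω, f (T ω) ∂P = ∫ t, f t ∂gammaMeasure κ r := by
    intro T κ r f hT hlaw hf
    rw [← hlaw, integral_map hT.aemeasurable hf.aestronglyMeasurable]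
  have trInt : ∀ {T : Ω → ℝ} {κ r : ℝ} {f : ℝ → ℝ}, Measurable T →
      Measure.map T P = gammaMeasure κ r → Measurable f →
      Integrable (fun ω => f (T ω)) P → Integrable f (gammaMeasure κ r) := by
    intro T κ r f hT hlaw hf hi
    rw [← hlaw]
    exact (integrable_map_measure hf.aestronglyMeasurable hT.aemeasurable).2 hi
  have hfair : ∫ t, shareFn a t ∂gammaMeasure μ l = ∫ t, shareFn at_ t ∂gammaMeasure μt lt := by
    rw [← tr hSmeas hSlaw measurable_shareFn, ← tr hStmeas hStlaw measurable_shareFn]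
    exact hfaira.trans hfairat.symm
  have hle : a ≤ at_ := le_of_integral_shareFn_eq hμt hμμt hl hlt hmean ha hat hfair
  constructor
  · intro g hg hi hit
    have hgm : Measurable g := (continuousOn_univ.1 (hg.continuousOn isOpen_univ)).measurable
    have hm₁ : Measurable fun t => g (shareFn a t) := hgm.comp measurable_shareFn
    have hm₂ : Measurable fun t => g (shareFn at_ t) := hgm.comp measurable_shareFn
    refine (tr hSmeas hSlaw hm₁).trans_le (le_trans ?_ (tr hStmeas hStlaw hm₂).symm.le)
    refine integral_comp_gammaMeasure_le hμt hμμt hl hlt measurable_shareFn measurable_shareFn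
      (q := fun x => x + x ^ 2 / a) (qt := fun x => x + x ^ 2 / at_)
      (fun t ht => ⟨shareFn_pos ha ht, (shareFn_lt ha ht).le⟩)
      (fun t ht => ⟨shareFn_pos hat ht, (shareFn_lt hat ht).le⟩)
      (fun t x ht hx => shareFn_le_iff ha ht hx) (fun t x ht hx => shareFn_le_iff hat ht hx)
      (fun x hx => by positivity) (fun x hx => by positivity)
      (fun x y hx hxy => by gcongr) (fun x y hx hxy => ?_) hfair hg
      (trInt hSmeas hSlaw hm₁ hi) (trInt hStmeas hStlaw hm₂ hit)
    have hy := hx.trans hxy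
    have hinv : at_⁻¹ ≤ a⁻¹ := inv_anti₀ ha hle
    have hprod : 0 ≤ x * y * ((y - x) * (a⁻¹ - at_⁻¹)) :=
      mul_nonneg (by positivity) (mul_nonneg (sub_nonneg.2 hxy.le) (sub_nonneg.2 hinv))
    simp only [div_eq_mul_inv]
    linear_combination hprod
  · intro g hg hi hit
    have hgm : Measurable g := (continuousOn_univ.1 (hg.continuousOn isOpen_univ)).measurable
    have hsub : ∀ c, Measurable fun t => t - shareFn c t := fun c => by fun_prop
    have hm₁ : Measurable fun t => g (t - shareFn a t) := hgm.comp (hsub a)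
    have hm₂ : Measurable fun t => g (t - shareFn at_ t) := hgm.comp (hsub at_)
    refine (tr hSmeas hSlaw hm₁).trans_le (le_trans ?_ (tr hStmeas hStlaw hm₂).symm.le)
    refine integral_comp_gammaMeasure_le hμt hμμt hl hlt (hsub a) (hsub at_)
      (q := fun x => x + Real.sqrt (a * x)) (qt := fun x => x + Real.sqrt (at_ * x))
      (fun t ht => ⟨sub_pos.2 (shareFn_lt ha ht), by linarith [shareFn_pos ha ht]⟩)
      (fun t ht => ⟨sub_pos.2 (shareFn_lt hat ht), by linarith [shareFn_pos hat ht]⟩)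
      (fun t x ht _ => sub_shareFn_le_iff ha ht)
      (fun t x ht _ => sub_shareFn_le_iff hat ht)
      (fun x hx => by positivity) (fun x hx => by positivity)
      (fun x y hx hxy => by gcongr) (fun x y hx hxy => ?_) ?_ hg
      (trInt hSmeas hSlaw hm₁ hi) (trInt hStmeas hStlaw hm₂ hit)
    · have hy := hx.trans hxy
      have hroot : Real.sqrt a ≤ Real.sqrt at_ := Real.sqrt_le_sqrt hle
      have hrootxy : Real.sqrt x ≤ Real.sqrt y := Real.sqrt_le_sqrt hxy.le
      have hprod : 0 ≤ Real.sqrt x * Real.sqrt y *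
          ((Real.sqrt y - Real.sqrt x) * (Real.sqrt at_ - Real.sqrt a)) :=
        mul_nonneg (by positivity) (mul_nonneg (sub_nonneg.2 hrootxy) (sub_nonneg.2 hroot))
      have hx₂ := Real.sq_sqrt hx.le
      have hy₂ := Real.sq_sqrt hy.le
      simp only [Real.sqrt_mul ha.le, Real.sqrt_mul hat.le]
      generalize Real.sqrt x = p at *
      generalize Real.sqrt y = q at *
      subst hx₂ hy₂
      linear_combination hprod
    · have hshare : ∀ {c κ r : ℝ}, 0 < c → 0 < κ → 0 < r →
          ∫ t, (t - shareFn c t) ∂gammaMeasure κ r =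
            κ / r - ∫ t, shareFn c t ∂gammaMeasure κ r := by
        intro c κ r hc hκ hr
        rw [integral_sub (f := fun t => t) (integrable_id_gammaMeasure hκ hr)
            (integrable_shareFn hc hκ hr),
          integral_id_gammaMeasure hκ hr]
      rw [hshare ha hμ hl, hshare hat hμt hlt, hmean, hfair]
end
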